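/- arXiv:1702.04969 — 4 statements merged into one kernel-verified Lean document; each statement's English description precedes it below -/
import Mathlib

section
/- Let n ≥ 3. There is a constant C = (2/(n-2))² such that for every smooth compactly supported function f : ℝⁿ → ℝ, ∫_{ℝⁿ} |f(x)|²/|x|² dx ≤ (2/(n-2))² ∫_{ℝⁿ} |∇f(x)|² dx. -/
open MeasureTheory

/-!
Write `d` for the dimension, `a = (d - 2) / 2`, and `g = ‖f‖² / (‖x‖² + ε)` for the Hardy density
smoothed at the origin. Dividing `0 ≤ ‖Df(x) x + a f(x)‖²` by `‖x‖² + ε` and expanding gives the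
pointwise bound `a² g ≤ ‖Df‖² + a (d g + Dg(x) x)`. The bracket is the divergence of the
compactly supported field `x ↦ g(x) x`, so it integrates to zero, and `ε → 0` finishes the proof;
the limit is dominated because `‖x‖⁻²` is locally integrable for `d > 2`.
-/

open Filter Module Topology
open scoped RealInnerProductSpace

lemma hasCompactSupport_norm_pow {X F : Type*} [TopologicalSpace X] [NormedAddCommGroup F]
    {f : X → F} {k : ℕ} (hk : k ≠ 0) (hsupp : HasCompactSupport f) :
    HasCompactSupport (fun x ↦ ‖f x‖ ^ k) :=
  hsupp.comp_left (g := fun y ↦ ‖y‖ ^ k) (by simp [hk])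

section Divergence

variable {E : Type*} [NormedAddCommGroup E] [NormedSpace ℝ E] [FiniteDimensional ℝ E]

variable (E) in
/-- The trace of endomorphisms of a finite-dimensional space, as a continuous linear functional, so
that it commutes with integrals. -/
noncomputable def traceCLM : (E →L[ℝ] E) →L[ℝ] ℝ :=
  (LinearMap.trace ℝ E ∘ₗ ContinuousLinearMap.coeLM ℝ).toContinuousLinearMap

/-- The divergence of a vector field `V`, that is, the trace of its derivative; it is `0` at points
where `V` is not differentiable. -/
noncomputable def divergence (V : E → E) (x : E) : ℝ :=
  traceCLM E (fderiv ℝ V x)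

lemma divergence_smul_id {g : E → ℝ} {x : E} (hg : DifferentiableAt ℝ g x) :
    divergence (fun y ↦ g y • y) x = finrank ℝ E * g x + fderiv ℝ g x x := by
  simp [divergence, traceCLM, fderiv_fun_smul hg differentiableAt_fun_id, mul_comm]

end Divergence

section Integration

variable {E F : Type*} [NormedAddCommGroup E] [NormedSpace ℝ E] [MeasurableSpace E] [BorelSpace E]
  [NormedAddCommGroup F] {μ : Measure E}

lemma integrable_fderiv_of_hasCompactSupport [NormedSpace ℝ F] [IsFiniteMeasureOnCompacts μ]
    {f : E → F} (hf : ContDiff ℝ 1 f) (hsupp : HasCompactSupport f) :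
    Integrable (fderiv ℝ f) μ :=
  (hf.continuous_fderiv one_ne_zero).integrable_of_hasCompactSupport (hsupp.fderiv ℝ)

variable [FiniteDimensional ℝ E] [μ.IsAddHaarMeasure]

lemma integral_fderiv_eq_zero [NormedSpace ℝ F] {f : E → F} (hf : ContDiff ℝ 1 f)
    (hsupp : HasCompactSupport f) : ∫ x, fderiv ℝ f x ∂μ = 0 := by
  have hint : Integrable (fderiv ℝ f) μ := integrable_fderiv_of_hasCompactSupport hf hsupp
  ext v
  rw [ContinuousLinearMap.integral_apply hint]
  simpa using integral_smul_fderiv_eq_neg_fderiv_smul_of_integrable (μ := μ)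
    (f := fun _ ↦ (1 : ℝ)) (g := f) (v := v) (by simp)
    (by simpa using hint.apply_continuousLinearMap v)
    (by simpa using hf.continuous.integrable_of_hasCompactSupport hsupp)
    (fun _ _ ↦ differentiableAt_const _) (fun x _ ↦ hf.differentiable one_ne_zero x)

lemma integral_divergence_eq_zero {V : E → E} (hV : ContDiff ℝ 1 V)
    (hsupp : HasCompactSupport V) : ∫ x, divergence V x ∂μ = 0 := by
  simp only [divergence]
  rw [ContinuousLinearMap.integral_comp_comm _ (integrable_fderiv_of_hasCompactSupport hV hsupp),
    integral_fderiv_eq_zero hV hsupp, map_zero]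

lemma integrable_div_norm_pow_of_hasCompactSupport {k : ℕ} (hk : k < finrank ℝ E) {g : E → ℝ}
    (hg : Continuous g) (hsupp : HasCompactSupport g) : Integrable (fun x ↦ g x / ‖x‖ ^ k) μ := by
  have hloc : LocallyIntegrable (fun x : E ↦ (‖x‖ ^ k)⁻¹) μ :=
    locallyIntegrable_of_norm_le_rpow (C := 1) (α := k) (by lia) (by exact_mod_cast hk)
      (.of_forall fun x ↦ by simp [Real.rpow_neg])
      (by fun_prop)
  simpa only [div_eq_mul_inv, smul_eq_mul] using
    hloc.integrable_smul_left_of_hasCompactSupport hg hsupp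

end Integration

section HardyDensity

variable {E F : Type*} [NormedAddCommGroup E] [NormedAddCommGroup F] {f : E → F} {ε : ℝ} {x : E}

/-- The integrand `‖f x‖² / ‖x‖²` of Hardy's inequality, with its singularity at the origin
smoothed by a parameter `ε > 0`. -/
noncomputable def hardyDensity (f : E → F) (ε : ℝ) (x : E) : ℝ :=
  ‖f x‖ ^ 2 / (‖x‖ ^ 2 + ε)

lemma hasCompactSupport_hardyDensity (hsupp : HasCompactSupport f) :
    HasCompactSupport (hardyDensity f ε) :=
  hsupp.mono fun x ↦ by simp +contextual [hardyDensity]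

lemma continuous_hardyDensity (hf : Continuous f) (hε : 0 < ε) :
    Continuous (hardyDensity f ε) :=
  (hf.norm.pow 2).div (by fun_prop) fun x ↦ by positivity

lemma norm_hardyDensity_le (hx : x ≠ 0) (hε : 0 < ε) :
    ‖hardyDensity f ε x‖ ≤ ‖f x‖ ^ 2 / ‖x‖ ^ 2 := by
  have : 0 < ‖x‖ := norm_pos_iff.mpr hx
  rw [hardyDensity, Real.norm_of_nonneg (by positivity)]
  gcongr
  linarith

lemma tendsto_hardyDensity (hx : x ≠ 0) :
    Tendsto (fun ε ↦ hardyDensity f ε x) (𝓝 0) (𝓝 (‖f x‖ ^ 2 / ‖x‖ ^ 2)) := by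
  have hcont : ContinuousAt (fun ε ↦ hardyDensity f ε x) 0 :=
    continuousAt_const.div (by fun_prop) (by simpa using hx)
  simpa [hardyDensity] using hcont.tendsto

lemma tendsto_integral_hardyDensity [MeasurableSpace E] [OpensMeasurableSpace E]
    [SecondCountableTopology E] {μ : Measure E} [NullSingletonClass μ] (hf : Continuous f)
    (hint : Integrable (fun x ↦ ‖f x‖ ^ 2 / ‖x‖ ^ 2) μ) :
    Tendsto (fun ε ↦ ∫ x, hardyDensity f ε x ∂μ) (𝓝[>] 0)
      (𝓝 (∫ x, ‖f x‖ ^ 2 / ‖x‖ ^ 2 ∂μ)) := by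
  have hne : ∀ᵐ x ∂μ, x ≠ 0 := Measure.ae_ne μ 0
  refine tendsto_integral_filter_of_dominated_convergence _ ?_ ?_ hint ?_
  · filter_upwards [self_mem_nhdsWithin] with ε hε
    exact (continuous_hardyDensity hf hε).aestronglyMeasurable
  · filter_upwards [self_mem_nhdsWithin] with ε hε
    filter_upwards [hne] with x hx using norm_hardyDensity_le hx hε
  · filter_upwards [hne] with x hx using (tendsto_hardyDensity hx).mono_left nhdsWithin_le_nhds

variable [InnerProductSpace ℝ E] [InnerProductSpace ℝ F]

lemma contDiff_hardyDensity {n : WithTop ℕ∞} (hf : ContDiff ℝ n f) (hε : 0 < ε) :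
    ContDiff ℝ n (hardyDensity f ε) :=
  (hf.norm_sq ℝ).div ((contDiff_norm_sq ℝ).add contDiff_const) fun x ↦ by positivity

lemma mul_fderiv_hardyDensity_apply_self (hf : DifferentiableAt ℝ f x) (hε : 0 < ε) :
    (‖x‖ ^ 2 + ε) * fderiv ℝ (hardyDensity f ε) x x =
      2 * ⟪f x, fderiv ℝ f x x⟫ - 2 * ‖x‖ ^ 2 * hardyDensity f ε x := by
  have hweight : HasFDerivAt (fun y : E ↦ ‖y‖ ^ 2 + ε) (2 • innerSL ℝ x) x :=
    (hasStrictFDerivAt_norm_sq x).hasFDerivAt.add_const ε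
  have hweight_ne : ‖x‖ ^ 2 + ε ≠ 0 := by positivity
  have hdiff : DifferentiableAt ℝ (hardyDensity f ε) x := by
    unfold hardyDensity
    simpa only [div_eq_mul_inv] using
      (hf.norm_sq ℝ).fun_mul (hweight.differentiableAt.fun_inv hweight_ne)
  have hprod : (fun y ↦ (‖y‖ ^ 2 + ε) * hardyDensity f ε y) = fun y ↦ ‖f y‖ ^ 2 := by
    ext y
    exact mul_div_cancel₀ _ (by positivity)
  have hderiv := hweight.fun_mul hdiff.hasFDerivAt
  rw [hprod] at hderiv
  have hradial := DFunLike.congr_fun (hderiv.unique hf.hasFDerivAt.norm_sq) x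
  simp only [add_apply, smul_apply, smul_eq_mul, coe_innerSL_apply, nsmul_eq_mul,
    Nat.cast_ofNat, real_inner_self_eq_norm_sq, ContinuousLinearMap.comp_apply] at hradial
  linarith

lemma sq_mul_hardyDensity_le (hf : DifferentiableAt ℝ f x) (hε : 0 < ε) {a : ℝ} (ha : 0 ≤ a) :
    a ^ 2 * hardyDensity f ε x ≤ ‖fderiv ℝ f x‖ ^ 2 +
      a * ((2 * a + 2) * hardyDensity f ε x + fderiv ℝ (hardyDensity f ε) x x) := by
  set w := ‖x‖ ^ 2 + ε
  set g := hardyDensity f ε x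
  have hw_pos : 0 < w := by positivity
  have hg_nonneg : 0 ≤ g := by unfold g hardyDensity; positivity
  have hwg : w * g = ‖f x‖ ^ 2 := mul_div_cancel₀ _ hw_pos.ne'
  have hxw : ‖x‖ ^ 2 ≤ w := by linarith
  have hradial : ‖fderiv ℝ f x x‖ ^ 2 ≤ w * ‖fderiv ℝ f x‖ ^ 2 :=
    calc ‖fderiv ℝ f x x‖ ^ 2 ≤ (‖fderiv ℝ f x‖ * ‖x‖) ^ 2 := by
          gcongr
          exact (fderiv ℝ f x).le_opNorm x
      _ = ‖x‖ ^ 2 * ‖fderiv ℝ f x‖ ^ 2 := by ring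
      _ ≤ w * ‖fderiv ℝ f x‖ ^ 2 := by gcongr
  have hsquare : 0 ≤ ‖fderiv ℝ f x x‖ ^ 2 + 2 * a * ⟪f x, fderiv ℝ f x x⟫ + a ^ 2 * ‖f x‖ ^ 2 :=
    calc 0 ≤ ‖fderiv ℝ f x x + a • f x‖ ^ 2 := sq_nonneg _
      _ = _ := by
        rw [norm_add_sq_real, real_inner_smul_right, real_inner_comm, norm_smul, mul_pow,
          Real.norm_eq_abs, sq_abs]
        ring
  have hfderiv := mul_fderiv_hardyDensity_apply_self hf hε
  have hxg : ‖x‖ ^ 2 * (a * g) ≤ w * (a * g) := by gcongr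
  rw [← sub_nonneg, ← mul_nonneg_iff_of_pos_left hw_pos]
  linear_combination hsquare + hradial + 2 * hxg - a * hfderiv - a ^ 2 * hwg

variable [FiniteDimensional ℝ E] [MeasurableSpace E] [BorelSpace E]
  {μ : Measure E} [μ.IsAddHaarMeasure]

lemma sq_mul_integral_hardyDensity_le (hd : 2 ≤ finrank ℝ E) (hf : ContDiff ℝ 1 f)
    (hsupp : HasCompactSupport f) (hε : 0 < ε) :
    (((finrank ℝ E : ℝ) - 2) / 2) ^ 2 * ∫ x, hardyDensity f ε x ∂μ ≤
      ∫ x, ‖fderiv ℝ f x‖ ^ 2 ∂μ := by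
  obtain ⟨a, ha, hda⟩ : ∃ a : ℝ, 0 ≤ a ∧ (finrank ℝ E : ℝ) = 2 * a + 2 := by
    have : (2 : ℝ) ≤ finrank ℝ E := by exact_mod_cast hd
    exact ⟨(finrank ℝ E - 2) / 2, by linarith, by ring⟩
  have hg := contDiff_hardyDensity hf hε
  have hg_supp : HasCompactSupport (hardyDensity f ε) := hasCompactSupport_hardyDensity hsupp
  let V : E → E := fun x ↦ hardyDensity f ε x • x
  have hV : ContDiff ℝ 1 V := hg.smul contDiff_id
  have hV_supp : HasCompactSupport V := hg_supp.smul_right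
  have hDf : Integrable (fun x ↦ ‖fderiv ℝ f x‖ ^ 2) μ :=
    ((hf.continuous_fderiv one_ne_zero).norm.pow 2).integrable_of_hasCompactSupport
      (hasCompactSupport_norm_pow two_ne_zero (hsupp.fderiv ℝ))
  have hdiv : Integrable (fun x ↦ a * divergence V x) μ :=
    ((traceCLM E).integrable_comp
      (integrable_fderiv_of_hasCompactSupport hV hV_supp)).const_mul a
  have hpointwise (x : E) :
      a ^ 2 * hardyDensity f ε x ≤ ‖fderiv ℝ f x‖ ^ 2 + a * divergence V x := by
    rw [divergence_smul_id (hg.differentiable one_ne_zero x), hda]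
    exact sq_mul_hardyDensity_le (hf.differentiable one_ne_zero x) hε ha
  calc ((finrank ℝ E - 2) / 2 : ℝ) ^ 2 * ∫ x, hardyDensity f ε x ∂μ
    _ = ∫ x, a ^ 2 * hardyDensity f ε x ∂μ := by
        rw [hda, integral_const_mul]
        ring
    _ ≤ ∫ x, (‖fderiv ℝ f x‖ ^ 2 + a * divergence V x) ∂μ :=
        integral_mono ((hg.continuous.integrable_of_hasCompactSupport hg_supp).const_mul _)
          (hDf.add hdiv) hpointwise
    _ = ∫ x, ‖fderiv ℝ f x‖ ^ 2 ∂μ := by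
        rw [integral_add hDf hdiv, integral_const_mul, integral_divergence_eq_zero hV hV_supp,
          mul_zero, add_zero]

end HardyDensity

theorem stmt_0_general {E F : Type*} [NormedAddCommGroup E] [InnerProductSpace ℝ E]
    [FiniteDimensional ℝ E] [MeasurableSpace E] [BorelSpace E] [NormedAddCommGroup F]
    [InnerProductSpace ℝ F] (μ : Measure E) [μ.IsAddHaarMeasure] (hd : 3 ≤ finrank ℝ E)
    {f : E → F} (hf : ContDiff ℝ 1 f) (hsupp : HasCompactSupport f) :
    Integrable (fun x ↦ ‖f x‖ ^ 2 / ‖x‖ ^ 2) μ ∧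
      ∫ x, ‖f x‖ ^ 2 / ‖x‖ ^ 2 ∂μ ≤
        (2 / ((finrank ℝ E : ℝ) - 2)) ^ 2 * ∫ x, ‖fderiv ℝ f x‖ ^ 2 ∂μ := by
  have hint : Integrable (fun x ↦ ‖f x‖ ^ 2 / ‖x‖ ^ 2) μ :=
    integrable_div_norm_pow_of_hasCompactSupport hd (hf.continuous.norm.pow 2)
      (hasCompactSupport_norm_pow two_ne_zero hsupp)
  refine ⟨hint, ?_⟩
  have : Nontrivial E := nontrivial_of_finrank_pos (R := ℝ) (by lia)
  have hlimit : (((finrank ℝ E : ℝ) - 2) / 2) ^ 2 * ∫ x, ‖f x‖ ^ 2 / ‖x‖ ^ 2 ∂μ ≤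
      ∫ x, ‖fderiv ℝ f x‖ ^ 2 ∂μ := by
    refine le_of_tendsto ((tendsto_integral_hardyDensity hf.continuous hint).const_mul _) ?_
    filter_upwards [self_mem_nhdsWithin] with ε hε
    exact sq_mul_integral_hardyDensity_le (by lia) hf hsupp hε
  have hpos : 0 < (finrank ℝ E : ℝ) - 2 := by
    have : (3 : ℝ) ≤ finrank ℝ E := by exact_mod_cast hd
    linarith
  rwa [← inv_div, inv_pow, ← div_eq_inv_mul, le_div_iff₀' (by positivity)]

/-- Classical Hardy inequality on ℝⁿ, n ≥ 3, with constant (2/(n-2))². -/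
theorem stmt_0 (n : ℕ) (hn : 3 ≤ n)
    (f : EuclideanSpace ℝ (Fin n) → ℝ)
    (hf : ContDiff ℝ (⊤ : ℕ∞) f) (hsupp : HasCompactSupport f) :
    ∫ x, |f x| ^ 2 / ‖x‖ ^ 2 ≤
      (2 / ((n : ℝ) - 2)) ^ 2 * ∫ x, ‖gradient f x‖ ^ 2 := by
  simpa [gradient] using
    (stmt_0_general volume (by simpa using hn) (hf.of_le (by simp)) hsupp).2
end

section
/- Let n ≥ 3, let 0 ≤ s ≤ 2, and set 2*(s) = 2(n-s)/(n-2). There exists a constant c(n,s) > 0 such that for every smooth compactly supported function f : ℝⁿ → ℝ, (∫_{ℝⁿ} |f(x)|^{2*(s)}/|x|^{s} dx)^{1/2*(s)} ≤ c(n,s) (∫_{ℝⁿ} |∇f(x)|² dx)^{1/2}. -/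
open MeasureTheory

open Module Filter Topology
open scoped ENNReal NNReal InnerProductSpace

/-!
Hölder's inequality applied to `|f|^{2*(s)} / |x|^s = (|f|² / |x|²)^{s/2} (|f|^{2*(0)})^{1-s/2}`
interpolates between the Sobolev inequality (`s = 0`) and Hardy's inequality (`s = 2`).

For Hardy's inequality, put `g = |f|² / (|x|² + ε)`. Integrating the divergence of `x ↦ g(x) x`
gives `∫ (d g + Dg(x) x) = 0`, and completing a square shows that the integrand, multiplied by
`(d - 2) / 2`, is at least `((d - 2) / 2)² g - |∇f|²`. Finally let `ε → 0`.
-/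

/-- The critical exponent `2*(s) = 2(d - s) / (d - 2)` of the Hardy–Sobolev inequality with weight
`|x|^{-s}` in dimension `d`. At `d = 2` it takes the junk value `0`. -/
noncomputable def hardySobolevExponent (d s : ℝ) : ℝ :=
  2 * (d - s) / (d - 2)

theorem hardySobolevExponent_pos {d s : ℝ} (hd : 2 < d) (hs : s < d) :
    0 < hardySobolevExponent d s :=
  div_pos (mul_pos two_pos (sub_pos.2 hs)) (sub_pos.2 hd)

theorem inv_hardySobolevExponent_zero {d : ℝ} (hd : d ≠ 0) :
    (hardySobolevExponent d 0)⁻¹ = 2⁻¹ - d⁻¹ := by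
  rw [hardySobolevExponent, inv_div, sub_zero]
  field_simp

theorem hardySobolevExponent_eq_interpolation {d : ℝ} (hd : d ≠ 2) (s : ℝ) :
    hardySobolevExponent d s = s + hardySobolevExponent d 0 * (1 - s / 2) := by
  have hd' : d - 2 ≠ 0 := sub_ne_zero.2 hd
  simp only [hardySobolevExponent]
  field_simp
  ring

section NormedSpace

variable {E F : Type*} [NormedAddCommGroup E] [NormedSpace ℝ E] [MeasurableSpace E] [BorelSpace E]
  [NormedAddCommGroup F] [NormedSpace ℝ F] {f : E → F} (μ : Measure E)

theorem memLp_fderiv_of_hasCompactSupport [IsFiniteMeasureOnCompacts μ]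
    (hf : ContDiff ℝ 1 f) (hfc : HasCompactSupport f) (p : ℝ≥0∞) : MemLp (fderiv ℝ f) p μ :=
  (hf.continuous_fderiv one_ne_zero).memLp_of_hasCompactSupport (hfc.fderiv ℝ)

theorem integral_fderiv_apply_self [FiniteDimensional ℝ E] [μ.IsAddHaarMeasure]
    (hf : ContDiff ℝ 1 f) (hfc : HasCompactSupport f) :
    ∫ x, fderiv ℝ f x x ∂μ = -((finrank ℝ E : ℝ) • ∫ x, f x ∂μ) := by
  let b := finBasis ℝ E
  let π i : E →L[ℝ] ℝ := (b.coord i).toContinuousLinearMap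
  have := hf.continuous_fderiv one_ne_zero
  have integrable_smul_fderiv i : Integrable (fun x ↦ π i x • fderiv ℝ f x (b i)) μ :=
    Continuous.integrable_of_hasCompactSupport (by fun_prop) <|
      (hfc.fderiv_apply ℝ (b i)).smul_left
  have integral_smul_fderiv i :
      ∫ x, π i x • fderiv ℝ f x (b i) ∂μ = -∫ x, f x ∂μ := by
    have hπ x : fderiv ℝ (π i) x (b i) = 1 := by
      rw [(π i).fderiv]
      simp [π]
    have hsmul : Integrable (fun x ↦ π i x • f x) μ :=
      ((π i).continuous.smul hf.continuous).integrable_of_hasCompactSupport hfc.smul_left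
    have hint : Integrable f μ := hf.continuous.integrable_of_hasCompactSupport hfc
    rw [integral_smul_fderiv_eq_neg_fderiv_smul_of_integrable
      (by simpa only [hπ, one_smul] using hint) (integrable_smul_fderiv i) hsmul
      (fun x _ ↦ (π i).differentiableAt) fun x _ ↦ hf.differentiable one_ne_zero x]
    simp only [hπ, one_smul]
  calc ∫ x, fderiv ℝ f x x ∂μ
    _ = ∫ x, ∑ i, π i x • fderiv ℝ f x (b i) ∂μ := by
      congr! 2 with x
      simpa only [map_sum, map_smul, π, LinearMap.coe_toContinuousLinearMap',
        Basis.coord_apply] using (congrArg (fderiv ℝ f x) (b.sum_repr x)).symm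
    _ = ∑ i, ∫ x, π i x • fderiv ℝ f x (b i) ∂μ :=
      integral_finsetSum _ fun i _ ↦ integrable_smul_fderiv i
    _ = -((finrank ℝ E : ℝ) • ∫ x, f x ∂μ) := by
      simp [integral_smul_fderiv, Nat.cast_smul_eq_nsmul]

end NormedSpace

section Lebesgue

variable {α : Type*} [MeasurableSpace α] {ν : Measure α}

theorem ofReal_integral_norm_sq {G : Type*} [NormedAddCommGroup G] {u : α → G} (hu : MemLp u 2 ν) :
    ENNReal.ofReal (∫ x, ‖u x‖ ^ 2 ∂ν) = ∫⁻ x, ‖u x‖ₑ ^ 2 ∂ν := by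
  rw [ofReal_integral_eq_lintegral_ofReal (hu.integrable_norm_pow two_ne_zero)
    (ae_of_all _ fun x ↦ by positivity)]
  simp only [ENNReal.ofReal_pow (norm_nonneg _), ofReal_norm]

theorem lintegral_rpow_div_rpow_le {u w : α → ℝ≥0∞} (hu : AEMeasurable u ν) (hw : AEMeasurable w ν)
    {s p : ℝ} (hs0 : 0 ≤ s) (hs2 : s ≤ 2) (hp : 0 ≤ p) :
    ∫⁻ x, u x ^ (s + p * (1 - s / 2)) / w x ^ s ∂ν ≤
      (∫⁻ x, u x ^ 2 / w x ^ 2 ∂ν) ^ (s / 2) * (∫⁻ x, u x ^ p ∂ν) ^ (1 - s / 2) := by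
  have hs0' : 0 ≤ s / 2 := by positivity
  have hs2' : 0 ≤ 1 - s / 2 := by linarith
  have hsplit x : u x ^ (s + p * (1 - s / 2)) / w x ^ s =
      (u x ^ 2 / w x ^ 2) ^ (s / 2) * (u x ^ p) ^ (1 - s / 2) := by
    simp only [← ENNReal.rpow_two]
    rw [ENNReal.div_rpow_of_nonneg _ _ hs0', ← ENNReal.rpow_mul, ← ENNReal.rpow_mul,
      ← ENNReal.rpow_mul, mul_div_cancel₀ s two_ne_zero,
      ENNReal.rpow_add_of_nonneg _ _ hs0 (by positivity), mul_comm, mul_div_assoc, mul_comm]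
  simp only [hsplit]
  exact ENNReal.lintegral_mul_norm_pow_le (by fun_prop) (by fun_prop) hs0' hs2' (by ring)

theorem enorm_integral_norm_rpow_div_norm_rpow_le {G H : Type*} [NormedAddCommGroup G]
    [NormedAddCommGroup H] {u : α → G} {w : α → H} {p s : ℝ} (hp : 0 ≤ p) (hs : 0 ≤ s) :
    ‖∫ x, ‖u x‖ ^ p / ‖w x‖ ^ s ∂ν‖ₑ ≤ ∫⁻ x, ‖u x‖ₑ ^ p / ‖w x‖ₑ ^ s ∂ν := by
  refine (enorm_integral_le_lintegral_enorm _).trans (lintegral_mono fun x ↦ ?_)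
  rw [div_eq_mul_inv, enorm_mul, Real.enorm_rpow_of_nonneg (norm_nonneg _) hp, enorm_norm,
    div_eq_mul_inv]
  gcongr
  rcases eq_or_ne (‖w x‖ ^ s) 0 with h | h
  · simp [h]
  · rw [enorm_inv h, Real.enorm_rpow_of_nonneg (norm_nonneg _) hs, enorm_norm]

end Lebesgue

section InnerProductSpace

variable {E F : Type*} [NormedAddCommGroup E] [InnerProductSpace ℝ E] [NormedAddCommGroup F]
  [InnerProductSpace ℝ F] {f : E → F} {ε : ℝ}

theorem fderiv_norm_sq_div_norm_sq_add_apply_self (hε : 0 < ε) {x : E}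
    (hf : DifferentiableAt ℝ f x) :
    fderiv ℝ (fun y ↦ ‖f y‖ ^ 2 / (‖y‖ ^ 2 + ε)) x x =
      2 * ⟪f x, fderiv ℝ f x x⟫_ℝ / (‖x‖ ^ 2 + ε) -
        2 * ‖f x‖ ^ 2 * ‖x‖ ^ 2 / (‖x‖ ^ 2 + ε) ^ 2 := by
  have hden : ‖x‖ ^ 2 + ε ≠ 0 := by positivity
  have hnum := hf.hasFDerivAt.norm_sq
  have hinv := (hasDerivAt_inv hden).comp_hasFDerivAt x
    ((hasStrictFDerivAt_norm_sq x).hasFDerivAt.add_const ε)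
  simp only [div_eq_mul_inv]
  refine (DFunLike.congr_fun (hnum.mul hinv).fderiv x).trans ?_
  simp only [Function.comp_apply, add_apply, smul_apply, ContinuousLinearMap.comp_apply,
    innerSL_apply_apply, real_inner_self_eq_norm_sq, smul_eq_mul]
  field_simp
  ring

theorem sq_mul_norm_sq_div_sub_norm_fderiv_sq_le {d : ℝ} (hd : 2 ≤ d) (hε : 0 < ε) {x : E}
    (hf : DifferentiableAt ℝ f x) :
    ((d - 2) / 2) ^ 2 * (‖f x‖ ^ 2 / (‖x‖ ^ 2 + ε)) - ‖fderiv ℝ f x‖ ^ 2 ≤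
      (d - 2) / 2 * (d * (‖f x‖ ^ 2 / (‖x‖ ^ 2 + ε)) +
        fderiv ℝ (fun y ↦ ‖f y‖ ^ 2 / (‖y‖ ^ 2 + ε)) x x) := by
  have hinner : -(‖f x‖ * (‖fderiv ℝ f x‖ * ‖x‖)) ≤ ⟪f x, fderiv ℝ f x x⟫_ℝ :=
    neg_le_of_abs_le <| (abs_real_inner_le_norm _ _).trans <| by
      gcongr
      exact (fderiv ℝ f x).le_opNorm x
  rw [fderiv_norm_sq_div_norm_sq_add_apply_self hε hf]
  obtain ⟨a, rfl⟩ : ∃ a, d = 2 * a + 2 := ⟨(d - 2) / 2, by ring⟩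
  have ha : 0 ≤ a := by linarith
  rw [show (2 * a + 2 - 2) / 2 = a by ring]
  set N := ‖f x‖
  set D := ‖fderiv ℝ f x‖
  set r := ‖x‖
  set J := ⟪f x, fderiv ℝ f x x⟫_ℝ
  set q := r ^ 2 + ε
  have hq : 0 < q := by positivity
  have hrq : 0 ≤ 1 - r ^ 2 / q := by
    rw [sub_nonneg, div_le_one hq]
    exact le_add_of_nonneg_right hε.le
  have hremainder : 0 ≤ 2 * a * ((J + N * (D * r)) / q) +
      (a ^ 2 + 2 * a) * (N ^ 2 / q) * (1 - r ^ 2 / q) := by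
    have : 0 ≤ J + N * (D * r) := by linarith
    positivity
  have difference_eq : a * ((2 * a + 2) * (N ^ 2 / q) + (2 * J / q - 2 * N ^ 2 * r ^ 2 / q ^ 2)) -
      (a ^ 2 * (N ^ 2 / q) - D ^ 2) = (a * (N * r / q) - D) ^ 2 +
        (2 * a * ((J + N * (D * r)) / q) + (a ^ 2 + 2 * a) * (N ^ 2 / q) * (1 - r ^ 2 / q)) := by
    field_simp
    ring
  linarith [sq_nonneg (a * (N * r / q) - D)]

variable [FiniteDimensional ℝ E] [MeasurableSpace E] [BorelSpace E] (μ : Measure E)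
  [μ.IsAddHaarMeasure]

theorem hardy_inequality_regularized (hd : 2 ≤ finrank ℝ E) (hε : 0 < ε)
    (hf : ContDiff ℝ 1 f) (hfc : HasCompactSupport f) :
    (((finrank ℝ E : ℝ) - 2) / 2) ^ 2 * ∫ x, ‖f x‖ ^ 2 / (‖x‖ ^ 2 + ε) ∂μ ≤
      ∫ x, ‖fderiv ℝ f x‖ ^ 2 ∂μ := by
  set d : ℝ := (finrank ℝ E : ℝ)
  have hd' : 2 ≤ d := Nat.ofNat_le_cast.2 hd
  let g : E → ℝ := fun x ↦ ‖f x‖ ^ 2 / (‖x‖ ^ 2 + ε)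
  have hg : ContDiff ℝ 1 g := (hf.norm_sq ℝ).div ((contDiff_norm_sq ℝ).add contDiff_const)
    fun x ↦ by positivity
  have hgc : HasCompactSupport g := hfc.mono fun x hx hfx ↦ hx (by simp [g, hfx])
  have hgi : Integrable g μ := hg.continuous.integrable_of_hasCompactSupport hgc
  have hg'c : HasCompactSupport fun x ↦ fderiv ℝ g x x :=
    (hgc.fderiv ℝ).mono fun x hx h ↦ hx (by simp [h])
  have hg'i : Integrable (fun x ↦ fderiv ℝ g x x) μ :=
    ((hg.continuous_fderiv one_ne_zero).clm_apply
      continuous_id).integrable_of_hasCompactSupport hg'c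
  have hf'i : Integrable (fun x ↦ ‖fderiv ℝ f x‖ ^ 2) μ :=
    (memLp_fderiv_of_hasCompactSupport μ hf hfc 2).integrable_norm_pow two_ne_zero
  have hmono := integral_mono ((hgi.const_mul (((d - 2) / 2) ^ 2)).sub hf'i)
    (((hgi.const_mul d).add hg'i).const_mul ((d - 2) / 2)) fun x ↦
      sq_mul_norm_sq_div_sub_norm_fderiv_sq_le hd' hε (hf.differentiable one_ne_zero x)
  have heuler : ∫ x, (d * g x + fderiv ℝ g x x) ∂μ = 0 := by
    rw [integral_add (hgi.const_mul d) hg'i, integral_const_mul,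
      integral_fderiv_apply_self μ hg hgc, smul_eq_mul, add_neg_cancel]
  simp only [Pi.sub_apply, Pi.add_apply] at hmono
  rw [integral_const_mul, heuler, integral_sub (hgi.const_mul _) hf'i,
    integral_const_mul] at hmono
  linarith

theorem hardy_inequality_regularized_lintegral (hd : 2 ≤ finrank ℝ E) (hε : 0 < ε)
    (hf : ContDiff ℝ 1 f) (hfc : HasCompactSupport f) :
    ENNReal.ofReal ((((finrank ℝ E : ℝ) - 2) / 2) ^ 2) *
        ∫⁻ x, ‖f x‖ₑ ^ 2 / (‖x‖ₑ ^ 2 + ENNReal.ofReal ε) ∂μ ≤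
      ∫⁻ x, ‖fderiv ℝ f x‖ₑ ^ 2 ∂μ := by
  have hcont : Continuous fun x ↦ ‖f x‖ ^ 2 / (‖x‖ ^ 2 + ε) :=
    (hf.continuous.norm.pow 2).div (by fun_prop) fun x ↦ by positivity
  have hint : Integrable (fun x ↦ ‖f x‖ ^ 2 / (‖x‖ ^ 2 + ε)) μ :=
    hcont.integrable_of_hasCompactSupport <| hfc.mono fun x hx hfx ↦ hx (by simp [hfx])
  have hofReal x : ENNReal.ofReal (‖f x‖ ^ 2 / (‖x‖ ^ 2 + ε)) =
      ‖f x‖ₑ ^ 2 / (‖x‖ₑ ^ 2 + ENNReal.ofReal ε) := by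
    rw [ENNReal.ofReal_div_of_pos (by positivity), ENNReal.ofReal_add (by positivity) hε.le]
    simp only [ENNReal.ofReal_pow (norm_nonneg _), ofReal_norm]
  simp only [← hofReal]
  rw [← ofReal_integral_eq_lintegral_ofReal hint (ae_of_all _ fun x ↦ by positivity),
    ← ENNReal.ofReal_mul (sq_nonneg _),
    ← ofReal_integral_norm_sq (memLp_fderiv_of_hasCompactSupport μ hf hfc 2)]
  exact ENNReal.ofReal_le_ofReal (hardy_inequality_regularized μ hd hε hf hfc)

theorem hardy_inequality (hd : 2 ≤ finrank ℝ E)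
    (hf : ContDiff ℝ 1 f) (hfc : HasCompactSupport f) :
    ENNReal.ofReal ((((finrank ℝ E : ℝ) - 2) / 2) ^ 2) * ∫⁻ x, ‖f x‖ₑ ^ 2 / ‖x‖ₑ ^ 2 ∂μ ≤
      ∫⁻ x, ‖fderiv ℝ f x‖ₑ ^ 2 ∂μ := by
  let ε (k : ℕ) : ℝ := 1 / ((k : ℝ) + 1)
  have hε_anti : Antitone ε := fun _ _ h ↦ Nat.one_div_le_one_div h
  have hε_tendsto : Tendsto (fun k ↦ ENNReal.ofReal (ε k)) atTop (𝓝 0) := by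
    simpa [ε] using ENNReal.tendsto_ofReal (tendsto_one_div_add_atTop_nhds_zero_nat (𝕜 := ℝ))
  have hmeas k : Measurable fun x ↦ ‖f x‖ₑ ^ 2 / (‖x‖ₑ ^ 2 + ENNReal.ofReal (ε k)) := by
    have := hf.continuous.enorm.measurable
    fun_prop
  have hmono x : Monotone fun k ↦ ‖f x‖ₑ ^ 2 / (‖x‖ₑ ^ 2 + ENNReal.ofReal (ε k)) := fun k l h ↦ by
    have := hε_anti h
    dsimp only
    gcongr
  have hlim x : Tendsto (fun k ↦ ‖f x‖ₑ ^ 2 / (‖x‖ₑ ^ 2 + ENNReal.ofReal (ε k))) atTop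
      (𝓝 (‖f x‖ₑ ^ 2 / ‖x‖ₑ ^ 2)) := by
    refine ENNReal.Tendsto.const_div ?_ (.inr (by finiteness))
    simpa using tendsto_const_nhds.add hε_tendsto
  have hlintegral := lintegral_tendsto_of_tendsto_of_monotone
    (fun k ↦ (hmeas k).aemeasurable (μ := μ)) (ae_of_all _ hmono) (ae_of_all _ hlim)
  exact le_of_tendsto' (ENNReal.Tendsto.const_mul hlintegral (.inr ENNReal.ofReal_ne_top))
    fun k ↦ hardy_inequality_regularized_lintegral μ hd Nat.one_div_pos_of_nat hf hfc

theorem sobolev_inequality {p p' : ℝ} (hp : 1 ≤ p) (hp'0 : 0 < p')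
    (hd : 0 < finrank ℝ E) (hp' : p'⁻¹ = p⁻¹ - (finrank ℝ E : ℝ)⁻¹)
    (hf : ContDiff ℝ 1 f) (hfc : HasCompactSupport f) :
    ∫⁻ x, ‖f x‖ₑ ^ p' ∂μ ≤
      (eLpNormLESNormFDerivOfEqInnerConst μ p : ℝ≥0∞) ^ p' *
        (∫⁻ x, ‖fderiv ℝ f x‖ₑ ^ p ∂μ) ^ (p' / p) := by
  lift p to ℝ≥0 using zero_le_one.trans hp
  lift p' to ℝ≥0 using hp'0.le
  have hp0 : p ≠ 0 := (zero_lt_one.trans_le (NNReal.one_le_coe.1 hp)).ne'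
  calc ∫⁻ x, ‖f x‖ₑ ^ (p' : ℝ) ∂μ
    _ = eLpNorm f p' μ ^ (p' : ℝ) :=
      (eLpNorm_nnreal_pow_eq_lintegral (NNReal.coe_pos.1 hp'0).ne').symm
    _ ≤ (eLpNormLESNormFDerivOfEqInnerConst μ p * eLpNorm (fderiv ℝ f) p μ) ^ (p' : ℝ) := by
      gcongr
      exact eLpNorm_le_eLpNorm_fderiv_of_eq_inner μ hf hfc (NNReal.one_le_coe.1 hp) hd hp'
    _ = _ := by
      rw [ENNReal.mul_rpow_of_nonneg _ _ p'.coe_nonneg, eLpNorm_nnreal_eq_lintegral hp0,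
        ← ENNReal.rpow_mul, one_div_mul_eq_div]

theorem hardy_sobolev_inequality (hd : 2 < finrank ℝ E) {s : ℝ}
    (hs0 : 0 ≤ s) (hs2 : s ≤ 2) :
    ∃ C : ℝ≥0∞, C ≠ ∞ ∧ ∀ f : E → F, ContDiff ℝ 1 f → HasCompactSupport f →
      ∫⁻ x, ‖f x‖ₑ ^ hardySobolevExponent (finrank ℝ E) s / ‖x‖ₑ ^ s ∂μ ≤
        C * (∫⁻ x, ‖fderiv ℝ f x‖ₑ ^ 2 ∂μ) ^ (hardySobolevExponent (finrank ℝ E) s / 2) := by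
  set d : ℝ := (finrank ℝ E : ℝ)
  have hd' : 2 < d := Nat.ofNat_lt_cast.2 hd
  set p := hardySobolevExponent d 0
  have hp : 0 < p := hardySobolevExponent_pos hd' (by linarith)
  have hs0' : 0 ≤ s / 2 := by positivity
  have hs2' : 0 ≤ 1 - s / 2 := by linarith
  let H := ENNReal.ofReal (((d - 2) / 2) ^ 2)
  have hH : H ≠ 0 := by
    have : 0 < d - 2 := by linarith
    exact (ENNReal.ofReal_pos.2 (by positivity)).ne'
  let S : ℝ≥0∞ := (eLpNormLESNormFDerivOfEqInnerConst μ 2 : ℝ≥0∞) ^ p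
  have hS : S ≠ ∞ := ENNReal.rpow_ne_top_of_nonneg hp.le ENNReal.coe_ne_top
  refine ⟨H⁻¹ ^ (s / 2) * S ^ (1 - s / 2), by finiteness, fun f hf hfc ↦ ?_⟩
  have hhardy := (ENNReal.mul_le_iff_le_inv hH ENNReal.ofReal_ne_top).1 <|
    hardy_inequality μ hd.le hf hfc
  have hsobolev : ∫⁻ x, ‖f x‖ₑ ^ p ∂μ ≤ S * (∫⁻ x, ‖fderiv ℝ f x‖ₑ ^ 2 ∂μ) ^ (p / 2) := by
    simpa only [ENNReal.rpow_two] using sobolev_inequality μ one_le_two hp (by omega)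
      (inv_hardySobolevExponent_zero (by positivity)) hf hfc
  set B := ∫⁻ x, ‖fderiv ℝ f x‖ₑ ^ 2 ∂μ
  rw [hardySobolevExponent_eq_interpolation hd'.ne']
  calc ∫⁻ x, ‖f x‖ₑ ^ (s + p * (1 - s / 2)) / ‖x‖ₑ ^ s ∂μ
    _ ≤ (∫⁻ x, ‖f x‖ₑ ^ 2 / ‖x‖ₑ ^ 2 ∂μ) ^ (s / 2) * (∫⁻ x, ‖f x‖ₑ ^ p ∂μ) ^ (1 - s / 2) :=
      lintegral_rpow_div_rpow_le hf.continuous.enorm.aemeasurable (by fun_prop) hs0 hs2 hp.le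
    _ ≤ (H⁻¹ * B) ^ (s / 2) * (S * B ^ (p / 2)) ^ (1 - s / 2) := by
      gcongr
    _ = H⁻¹ ^ (s / 2) * S ^ (1 - s / 2) * B ^ ((s + p * (1 - s / 2)) / 2) := by
      rw [ENNReal.mul_rpow_of_nonneg _ _ hs0', ENNReal.mul_rpow_of_nonneg _ _ hs2',
        ← ENNReal.rpow_mul B, mul_mul_mul_comm,
        ← ENNReal.rpow_add_of_nonneg _ _ hs0' (by positivity)]
      ring_nf

theorem hardy_sobolev_inequality_rpow_inv (hd : 2 < finrank ℝ E) {s : ℝ}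
    (hs0 : 0 ≤ s) (hs2 : s ≤ 2) :
    ∃ C : ℝ≥0, ∀ f : E → F, ContDiff ℝ 1 f → HasCompactSupport f →
      (∫⁻ x, ‖f x‖ₑ ^ hardySobolevExponent (finrank ℝ E) s / ‖x‖ₑ ^ s ∂μ) ^
          (hardySobolevExponent (finrank ℝ E) s)⁻¹ ≤
        C * (∫⁻ x, ‖fderiv ℝ f x‖ₑ ^ 2 ∂μ) ^ (2⁻¹ : ℝ) := by
  obtain ⟨C, hC, hCf⟩ := hardy_sobolev_inequality (F := F) μ hd hs0 hs2
  set p := hardySobolevExponent (finrank ℝ E) s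
  have hp : 0 < p := hardySobolevExponent_pos (Nat.ofNat_lt_cast.2 hd)
    (hs2.trans_lt (Nat.ofNat_lt_cast.2 hd))
  have hC' : C ^ p⁻¹ ≠ ∞ := ENNReal.rpow_ne_top_of_nonneg (by positivity) hC
  refine ⟨(C ^ p⁻¹).toNNReal, fun f hf hfc ↦ ?_⟩
  rw [ENNReal.coe_toNNReal hC']
  set B := ∫⁻ x, ‖fderiv ℝ f x‖ₑ ^ 2 ∂μ
  calc (∫⁻ x, ‖f x‖ₑ ^ p / ‖x‖ₑ ^ s ∂μ) ^ p⁻¹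
    _ ≤ (C * B ^ (p / 2)) ^ p⁻¹ := by
      gcongr
      exact hCf f hf hfc
    _ = C ^ p⁻¹ * B ^ (2⁻¹ : ℝ) := by
      rw [ENNReal.mul_rpow_of_nonneg _ _ (by positivity), ← ENNReal.rpow_mul]
      field_simp

theorem stmt_2_general (hd : 2 < finrank ℝ E) {s : ℝ} (hs0 : 0 ≤ s) (hs2 : s ≤ 2) :
    ∃ c : ℝ, 0 < c ∧ ∀ f : E → F, ContDiff ℝ 1 f → HasCompactSupport f →
      (∫ x, ‖f x‖ ^ hardySobolevExponent (finrank ℝ E) s / ‖x‖ ^ s ∂μ) ^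
          (hardySobolevExponent (finrank ℝ E) s)⁻¹ ≤
        c * (∫ x, ‖fderiv ℝ f x‖ ^ 2 ∂μ) ^ (2⁻¹ : ℝ) := by
  obtain ⟨C, hCf⟩ := hardy_sobolev_inequality_rpow_inv (F := F) μ hd hs0 hs2
  set p := hardySobolevExponent (finrank ℝ E) s
  have hp : 0 < p := hardySobolevExponent_pos (Nat.ofNat_lt_cast.2 hd)
    (hs2.trans_lt (Nat.ofNat_lt_cast.2 hd))
  refine ⟨C + 1, by positivity, fun f hf hfc ↦ ?_⟩
  have hI : 0 ≤ ∫ x, ‖f x‖ ^ p / ‖x‖ ^ s ∂μ := integral_nonneg fun x ↦ by positivity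
  have hB : 0 ≤ ∫ x, ‖fderiv ℝ f x‖ ^ 2 ∂μ := integral_nonneg fun x ↦ by positivity
  rw [← ENNReal.ofReal_le_ofReal_iff (by positivity), ENNReal.ofReal_mul (by positivity),
    ← ENNReal.ofReal_rpow_of_nonneg hI (by positivity),
    ← ENNReal.ofReal_rpow_of_nonneg hB (by positivity),
    ofReal_integral_norm_sq (memLp_fderiv_of_hasCompactSupport μ hf hfc 2),
    ← Real.enorm_of_nonneg hI]
  calc ‖∫ x, ‖f x‖ ^ p / ‖x‖ ^ s ∂μ‖ₑ ^ p⁻¹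
    _ ≤ (∫⁻ x, ‖f x‖ₑ ^ p / ‖x‖ₑ ^ s ∂μ) ^ p⁻¹ := by
      gcongr
      exact enorm_integral_norm_rpow_div_norm_rpow_le hp.le hs0
    _ ≤ C * (∫⁻ x, ‖fderiv ℝ f x‖ₑ ^ 2 ∂μ) ^ (2⁻¹ : ℝ) := hCf f hf hfc
    _ ≤ ENNReal.ofReal (C + 1) * (∫⁻ x, ‖fderiv ℝ f x‖ₑ ^ 2 ∂μ) ^ (2⁻¹ : ℝ) := by
      gcongr
      rw [← ENNReal.ofReal_coe_nnreal]
      exact ENNReal.ofReal_le_ofReal (le_add_of_nonneg_right zero_le_one)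

end InnerProductSpace

/-- Hardy–Sobolev inequality on ℝⁿ, n ≥ 3, 0 ≤ s ≤ 2, with critical exponent
`2*(s) = 2(n-s)/(n-2)`. -/
theorem stmt_2 (n : ℕ) (hn : 3 ≤ n) (s : ℝ) (hs0 : 0 ≤ s) (hs2 : s ≤ 2) :
    ∃ c : ℝ, 0 < c ∧ ∀ f : EuclideanSpace ℝ (Fin n) → ℝ,
      ContDiff ℝ (⊤ : ℕ∞) f → HasCompactSupport f →
      (∫ x, |f x| ^ (2 * ((n : ℝ) - s) / ((n : ℝ) - 2)) / ‖x‖ ^ s) ^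
          (((n : ℝ) - 2) / (2 * ((n : ℝ) - s))) ≤
        c * (∫ x, ‖gradient f x‖ ^ 2) ^ ((1 : ℝ) / 2) := by
  obtain ⟨c, hc, hcf⟩ := stmt_2_general (E := EuclideanSpace ℝ (Fin n)) (F := ℝ) volume
    (by rwa [finrank_euclideanSpace_fin]) hs0 hs2
  exact ⟨c, hc, fun f hf hfc ↦ by
    simpa [hardySobolevExponent, gradient] using hcf f (hf.of_le (mod_cast le_top)) hfc⟩
end

section
/- Let n ≥ 1, let p ≥ 1, q ≥ 1, r > 0, let α, β, γ be real and 0 < a ≤ 1, and assume -γ < n/r, -α < n/p, -β < n/q, and γ + n/r = a(α - 1 + n/p) + (1-a)(β + n/q). Set Δ = -γ + aα + (1-a)β. If Δ ≥ 0, and moreover Δ ≤ a in the case 1/r + γ/n = 1/p + (α-1)/n, then there exists a constant c > 0 such that for all smooth compactly supported f : ℝⁿ → ℝ, (∫_{ℝⁿ} |x|^{γr} |f(x)|^{r} dx)^{1/r} ≤ c (∫_{ℝⁿ} |x|^{αp} |∇f(x)|^{p} dx)^{a/p} (∫_{ℝⁿ} |x|^{βq} |f(x)|^{q} dx)^{(1-a)/q}.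 -/
open MeasureTheory

/-!
Work with `L^{1/τ}` norms weighted by `|x|^κ`. For functions vanishing near the origin, Sobolev's
inequality in `W^{1,1}` applied to `|x|^δ |u|^s`, followed by Hölder's inequality, bounds the
left-hand norm by `∇u` together with the Hardy term `|u| / |x|`; a factor of the left-hand norm
itself is absorbed. Cutting off at the origin extends this to all `u`. The Hardy term is removed by
testing on the dilation difference `u - u(2 ·)`: divided by `|x|` it is an average of `∇u(t ·)`,
`1 ≤ t ≤ 2`, while its left-hand norm is comparable with that of `u`, because dilating by `2`
contracts the norm exactly when `γ + n / r > 0`.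

This settles `Δ ≤ a`. If `Δ > a`, the two gradient inequalities with `a ± δ` in place of `a` and
`Δ = a ± δ` have scaling degrees on either side of `γ + n / r`. Apply Hölder's inequality with one
of them on a ball of radius `R`, with the other off it, and optimize over `R`.
-/

namespace CaffarelliKohnNirenberg

open Module Set Filter
open scoped ENNReal NNReal Topology

variable {E : Type*} [NormedAddCommGroup E]

section WeightedNorm

variable [MeasurableSpace E]

/-- The weighted Lebesgue norm `‖|x|^κ u‖_{L^{1/τ}(μ)}`. The parameter `τ` is the reciprocal of the
Lebesgue exponent, so that `τ = 0` is the essential supremum and Hölder's inequality is additive in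
both parameters. -/
noncomputable def weightedNorm (μ : Measure E) (κ τ : ℝ) (u : E → ℝ) : ℝ≥0∞ :=
  eLpNorm (fun x ↦ ‖x‖ ^ κ * u x) (ENNReal.ofReal τ)⁻¹ μ

variable {μ : Measure E} {κ τ : ℝ} {u v : E → ℝ}

lemma aestronglyMeasurable_weight_mul [OpensMeasurableSpace E] (κ : ℝ)
    (hu : AEStronglyMeasurable u μ) : AEStronglyMeasurable (fun x ↦ ‖x‖ ^ κ * u x) μ :=
  (by fun_prop : Measurable fun x : E ↦ ‖x‖ ^ κ).aestronglyMeasurable.mul hu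

lemma weightedNorm_congr_abs (h : ∀ x, |u x| = |v x|) :
    weightedNorm μ κ τ u = weightedNorm μ κ τ v :=
  eLpNorm_congr_norm_ae (.of_forall fun x ↦ by
    rw [norm_mul, norm_mul, Real.norm_eq_abs (u x), Real.norm_eq_abs (v x), h x])

lemma weightedNorm_rpow_inv (hτ : 0 < τ) :
    weightedNorm μ κ τ u ^ τ⁻¹ = ∫⁻ x, ‖‖x‖ ^ κ * u x‖ₑ ^ τ⁻¹ ∂μ := by
  have hp : (ENNReal.ofReal τ)⁻¹ ≠ 0 := ENNReal.inv_ne_zero.2 ENNReal.ofReal_ne_top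
  rw [weightedNorm, eLpNorm_eq_lintegral_rpow_enorm_toReal hp (by simpa), ENNReal.toReal_inv,
    ENNReal.toReal_ofReal hτ.le, one_div, ENNReal.rpow_inv_rpow (inv_pos.2 hτ).ne']

lemma weightedNorm_le_mul {C : ℝ≥0} (h : ∀ᵐ x ∂μ, |u x| ≤ C * |v x|) :
    weightedNorm μ κ τ u ≤ C * weightedNorm μ κ τ v := by
  refine eLpNorm_le_nnreal_smul_eLpNorm_of_ae_le_mul (h.mono fun x hx ↦ ?_) _
  rw [← NNReal.coe_le_coe]
  push_cast
  rw [norm_mul, norm_mul, mul_left_comm]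
  exact mul_le_mul_of_nonneg_left hx (norm_nonneg _)

lemma weightedNorm_mono (h : ∀ᵐ x ∂μ, |u x| ≤ |v x|) :
    weightedNorm μ κ τ u ≤ weightedNorm μ κ τ v := by
  simpa using weightedNorm_le_mul (C := 1) (by simpa using h)

lemma weightedNorm_abs_rpow {s : ℝ} (hs : 0 < s) :
    weightedNorm μ (s * κ) (s * τ) (fun x ↦ |u x| ^ s) = weightedNorm μ κ τ u ^ s := by
  have hexp : (ENNReal.ofReal (s * τ))⁻¹ * ENNReal.ofReal s = (ENNReal.ofReal τ)⁻¹ := by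
    rw [ENNReal.ofReal_mul hs.le, ENNReal.mul_inv (.inl (by simpa)) (.inl ENNReal.ofReal_ne_top),
      mul_right_comm, ENNReal.inv_mul_cancel (by simpa) ENNReal.ofReal_ne_top, one_mul]
  rw [weightedNorm, weightedNorm, ← hexp, ← eLpNorm_norm_rpow _ hs]
  congr 1 with x
  rw [norm_mul, Real.mul_rpow (norm_nonneg _) (norm_nonneg _), mul_comm s κ,
    Real.rpow_mul (norm_nonneg x), Real.norm_of_nonneg (by positivity : (0 : ℝ) ≤ ‖x‖ ^ κ),
    Real.norm_eq_abs]

lemma weightedNorm_abs_rpow_le {s : ℝ} (hs : 0 ≤ s) :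
    weightedNorm μ (s * κ) (s * τ) (fun x ↦ |u x| ^ s) ≤ weightedNorm μ κ τ u ^ s := by
  rcases hs.eq_or_lt with rfl | hs
  · simpa [weightedNorm] using eLpNormEssSup_le_of_ae_enorm_bound (C := 1) (by simp)
  · exact (weightedNorm_abs_rpow hs).le

lemma weightedNorm_add_le' [OpensMeasurableSpace E] (hu : AEStronglyMeasurable u μ)
    (hv : AEStronglyMeasurable v μ) :
    weightedNorm μ κ τ (u + v) ≤
      ENNReal.LpAddConst (ENNReal.ofReal τ)⁻¹ * (weightedNorm μ κ τ u + weightedNorm μ κ τ v) := by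
  simp only [weightedNorm, Pi.add_apply, mul_add]
  rw [← mul_add]
  exact eLpNorm_add_le' (aestronglyMeasurable_weight_mul κ hu)
    (aestronglyMeasurable_weight_mul κ hv) _

lemma weightedNorm_add_le [OpensMeasurableSpace E] (hu : AEStronglyMeasurable u μ)
    (hv : AEStronglyMeasurable v μ) (hτ : τ ≤ 1) :
    weightedNorm μ κ τ (u + v) ≤ weightedNorm μ κ τ u + weightedNorm μ κ τ v := by
  simpa [ENNReal.LpAddConst_of_one_le (ENNReal.one_le_inv.2 (ENNReal.ofReal_le_one.2 hτ))] using
    weightedNorm_add_le' (κ := κ) (τ := τ) hu hv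

lemma weightedNorm_le_of_tendsto [OpensMeasurableSpace E] {w : ℕ → E → ℝ} {B : ℝ≥0∞}
    (hw : ∀ k, AEStronglyMeasurable (w k) μ)
    (hlim : ∀ᵐ x ∂μ, Tendsto (fun k ↦ w k x) atTop (𝓝 (u x)))
    (hB : ∀ k, weightedNorm μ κ τ (w k) ≤ B) : weightedNorm μ κ τ u ≤ B :=
  (Lp.eLpNorm_lim_le_liminf_eLpNorm (fun k ↦ aestronglyMeasurable_weight_mul κ (hw k)) _
    (hlim.mono fun _ hx ↦ hx.const_mul _)).trans
      (liminf_le_of_frequently_le' (.of_forall hB))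

end WeightedNorm

section Holder

variable [MeasurableSpace E] [OpensMeasurableSpace E] {μ : Measure E} [NullSingletonClass μ]
  {κ₀ κ₁ τ₀ τ₁ : ℝ} {u v : E → ℝ}

lemma weightedNorm_mul_le (hu : AEStronglyMeasurable u μ) (hv : AEStronglyMeasurable v μ)
    (hτ₀ : 0 ≤ τ₀) (hτ₁ : 0 ≤ τ₁) :
    weightedNorm μ (κ₀ + κ₁) (τ₀ + τ₁) (fun x ↦ u x * v x) ≤
      weightedNorm μ κ₀ τ₀ u * weightedNorm μ κ₁ τ₁ v := by
  have : ENNReal.HolderTriple (ENNReal.ofReal τ₀)⁻¹ (ENNReal.ofReal τ₁)⁻¹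
      (ENNReal.ofReal (τ₀ + τ₁))⁻¹ := ⟨by simp [ENNReal.ofReal_add hτ₀ hτ₁]⟩
  refine le_of_eq_of_le (eLpNorm_congr_ae ?_)
    (eLpNorm_smul_le_mul_eLpNorm
      (aestronglyMeasurable_weight_mul κ₁ hv) (aestronglyMeasurable_weight_mul κ₀ hu))
  filter_upwards [Measure.ae_ne μ 0] with x hx
  simp only [Pi.smul_apply', smul_eq_mul, Real.rpow_add (norm_pos_iff.2 hx)]
  ring

lemma weightedNorm_mul_rpow_le {s : ℝ} (hs : 0 ≤ s) (hu : AEStronglyMeasurable u μ)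
    (hv : AEStronglyMeasurable v μ) (hτ₀ : 0 ≤ τ₀) (hτ₁ : 0 ≤ τ₁) :
    weightedNorm μ (κ₀ + s * κ₁) (τ₀ + s * τ₁) (fun x ↦ u x * |v x| ^ s) ≤
      weightedNorm μ κ₀ τ₀ u * weightedNorm μ κ₁ τ₁ v ^ s :=
  (weightedNorm_mul_le hu (by fun_prop) hτ₀ (mul_nonneg hs hτ₁)).trans
    (mul_le_mul_right (weightedNorm_abs_rpow_le hs) _)

lemma weightedNorm_mul_rpow_add_le {w : E → ℝ} (hw : AEStronglyMeasurable w μ)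
    (hu : AEStronglyMeasurable u μ) {κ₂ τ₂ s t : ℝ} (hτ₀ : 0 ≤ τ₀) (hτ₁ : 0 ≤ τ₁) (hτ₂ : 0 ≤ τ₂)
    (hs : 0 ≤ s) (ht : 0 ≤ t) :
    weightedNorm μ (κ₀ + s * κ₁ + t * κ₂) (τ₀ + s * τ₁ + t * τ₂)
        (fun x ↦ w x * |u x| ^ (s + t)) ≤
      weightedNorm μ κ₀ τ₀ w * weightedNorm μ κ₁ τ₁ u ^ s * weightedNorm μ κ₂ τ₂ u ^ t := by
  simp only [Real.rpow_add_of_nonneg (abs_nonneg _) hs ht, ← mul_assoc]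
  exact (weightedNorm_mul_rpow_le ht (by fun_prop) hu (by positivity) hτ₂).trans
    (mul_le_mul_left (weightedNorm_mul_rpow_le hs hw hu hτ₀ hτ₁) _)

lemma weightedNorm_interpolation {θ : ℝ} (hθ₀ : 0 ≤ θ) (hθ₁ : θ ≤ 1)
    (hu : AEStronglyMeasurable u μ) (hτ₀ : 0 ≤ τ₀) (hτ₁ : 0 ≤ τ₁) :
    weightedNorm μ (θ * κ₀ + (1 - θ) * κ₁) (θ * τ₀ + (1 - θ) * τ₁) u ≤
      weightedNorm μ κ₀ τ₀ u ^ θ * weightedNorm μ κ₁ τ₁ u ^ (1 - θ) := by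
  have hsplit (x : E) : |u x| = |(|u x| ^ θ) * |u x| ^ (1 - θ)| := by
    rw [← Real.rpow_add' (abs_nonneg _) (by simp), add_sub_cancel, Real.rpow_one, abs_abs]
  rw [weightedNorm_congr_abs hsplit]
  exact (weightedNorm_mul_rpow_le (sub_nonneg.2 hθ₁) (by fun_prop) hu
    (mul_nonneg hθ₀ hτ₀) hτ₁).trans (mul_le_mul_left (weightedNorm_abs_rpow_le hθ₀) _)

lemma weightedNorm_le_of_interpolation (hu : AEStronglyMeasurable u μ) {C J : ℝ≥0∞}
    {a θ γ ρ β ω : ℝ} (ha : a ≤ 1) (hθ₀ : 0 ≤ θ) (hθ₁ : θ ≤ 1) (hρ : 0 ≤ ρ) (hω : 0 ≤ ω)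
    (h : weightedNorm μ γ ρ u ≤ C * J ^ a * weightedNorm μ β ω u ^ (1 - a)) :
    weightedNorm μ (θ * γ + (1 - θ) * β) (θ * ρ + (1 - θ) * ω) u ≤
      C ^ θ * J ^ (θ * a) * weightedNorm μ β ω u ^ (1 - θ * a) := by
  have hsum : 1 - θ * a = θ * (1 - a) + (1 - θ) := by ring
  calc _ ≤ weightedNorm μ γ ρ u ^ θ * weightedNorm μ β ω u ^ (1 - θ) :=
        weightedNorm_interpolation hθ₀ hθ₁ hu hρ hω
    _ ≤ (C * J ^ a * weightedNorm μ β ω u ^ (1 - a)) ^ θ * weightedNorm μ β ω u ^ (1 - θ) := by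
        gcongr
    _ = _ := by
        rw [hsum, ENNReal.rpow_add_of_nonneg _ _ (mul_nonneg hθ₀ (sub_nonneg.2 ha))
          (sub_nonneg.2 hθ₁), ENNReal.mul_rpow_of_nonneg _ _ hθ₀,
          ENNReal.mul_rpow_of_nonneg _ _ hθ₀, ← ENNReal.rpow_mul, ← ENNReal.rpow_mul,
          mul_comm a, mul_comm (1 - a), ← mul_assoc]

end Holder

section Dilation

variable [NormedSpace ℝ E] [FiniteDimensional ℝ E] [MeasurableSpace E] [BorelSpace E]
  {μ : Measure E} [μ.IsAddHaarMeasure] {κ τ : ℝ}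

lemma weightedNorm_comp_smul (hτ : 0 ≤ τ) {c : ℝ} (hc : 0 < c) (u : E → ℝ) :
    weightedNorm μ κ τ (fun x ↦ u (c • x)) =
      ENNReal.ofReal (c ^ (-(κ + finrank ℝ E * τ))) * weightedNorm μ κ τ u := by
  have hpull : weightedNorm μ κ τ (fun x ↦ u (c • x)) =
      ENNReal.ofReal (c ^ (-κ)) * eLpNorm ((fun x ↦ ‖x‖ ^ κ * u x) ∘ (c • ·))
        (ENNReal.ofReal τ)⁻¹ μ := by
    rw [← Real.enorm_of_nonneg (by positivity), ← eLpNorm_const_smul, weightedNorm]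
    congr 1 with x
    simp only [Pi.smul_apply, Function.comp_apply, smul_eq_mul, norm_smul,
      Real.norm_of_nonneg hc.le, Real.mul_rpow hc.le (norm_nonneg x)]
    rw [Real.rpow_neg hc.le]
    field_simp
  have hscale : ENNReal.ofReal |(c ^ finrank ℝ E)⁻¹| ≠ 0 :=
    (ENNReal.ofReal_pos.2 (by positivity)).ne'
  rw [hpull, ← (measurableEmbedding_const_smul₀ hc.ne').eLpNorm_map_measure,
    Measure.map_addHaar_smul μ hc.ne', eLpNorm_smul_measure_of_ne_zero hscale, smul_eq_mul,
    ← mul_assoc, weightedNorm, one_div, inv_inv, ENNReal.toReal_ofReal hτ,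
    ENNReal.ofReal_rpow_of_nonneg (abs_nonneg _) hτ, ← ENNReal.ofReal_mul (by positivity)]
  congr 2
  rw [abs_of_nonneg (by positivity), ← Real.rpow_natCast, ← Real.rpow_neg hc.le,
    ← Real.rpow_mul hc.le, ← Real.rpow_add hc]
  ring_nf

end Dilation

section GagliardoNirenbergSobolev

variable [NormedSpace ℝ E] [FiniteDimensional ℝ E] [MeasurableSpace E] [BorelSpace E]
  (μ : Measure E) [μ.IsAddHaarMeasure]

lemma exists_enorm_le_lintegral_fderiv (hE : finrank ℝ E = 1) :
    ∃ C : ℝ≥0, ∀ v : E → ℝ, ContDiff ℝ 1 v → HasCompactSupport v → ∀ x,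
      ‖v x‖ₑ ≤ C * ∫⁻ y, ‖fderiv ℝ v y‖ₑ ∂μ := by
  have : Nontrivial E := finrank_pos_iff.1 (hE.symm ▸ one_pos)
  obtain ⟨e, he⟩ := exists_norm_eq E zero_le_one
  let L : ℝ ≃ₗᵢ[ℝ] E :=
    (LinearIsometry.toSpanSingleton ℝ E he).toLinearIsometryEquiv (by simp [hE])
  have hL (t : ℝ) : HasDerivAt L (L 1) t :=
    L.toContinuousLinearEquiv.toContinuousLinearMap.hasDerivAt
  let ν : Measure ℝ := μ.map L.symm
  have : ν.IsAddHaarMeasure := L.symm.toContinuousLinearEquiv.isAddHaarMeasure_map μ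
  refine ⟨Measure.addHaarScalarFactor volume ν, fun v hv hvc x ↦ ?_⟩
  have hderiv (t : ℝ) : ‖deriv (v ∘ L) t‖ₑ ≤ ‖fderiv ℝ v (L t)‖ₑ := by
    rw [((hv.differentiable one_ne_zero (L t)).hasFDerivAt.comp_hasDerivAt t (hL t)).deriv,
      enorm_le_iff_norm_le]
    simpa using (fderiv ℝ v (L t)).le_opNorm (L 1)
  calc ‖v x‖ₑ = ‖(v ∘ L) (L.symm x)‖ₑ := by simp
    _ ≤ ∫⁻ t in Iic (L.symm x), ‖deriv (v ∘ L) t‖ₑ :=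
      (hvc.comp_homeomorph L.toHomeomorph).enorm_le_lintegral_Ici_deriv
        (hv.comp L.contDiff) _
    _ ≤ ∫⁻ t, ‖fderiv ℝ v (L t)‖ₑ := (setLIntegral_le_lintegral _ _).trans (lintegral_mono hderiv)
    _ = Measure.addHaarScalarFactor volume ν * ∫⁻ t, ‖fderiv ℝ v (L t)‖ₑ ∂ν := by
      conv_lhs => rw [Measure.isAddLeftInvariant_eq_smul volume ν]
      rw [lintegral_smul_measure]
      rfl
    _ = Measure.addHaarScalarFactor volume ν * ∫⁻ y, ‖fderiv ℝ v y‖ₑ ∂μ := by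
      congr 1
      simpa using L.symm.toHomeomorph.measurableEmbedding.lintegral_map (μ := μ)
        fun t ↦ ‖fderiv ℝ v (L t)‖ₑ

lemma exists_eLpNorm_le_eLpNorm_fderiv_one [Nontrivial E] :
    ∃ C : ℝ≥0, ∀ v : E → ℝ, ContDiff ℝ 1 v → HasCompactSupport v →
      eLpNorm v (ENNReal.ofReal (1 - (finrank ℝ E : ℝ)⁻¹))⁻¹ μ ≤ C * eLpNorm (fderiv ℝ v) 1 μ := by
  rcases (Nat.one_le_iff_ne_zero.2 (finrank_pos (R := ℝ) (M := E)).ne').eq_or_lt with hn | hn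
  · obtain ⟨C, hC⟩ := exists_enorm_le_lintegral_fderiv μ hn.symm
    refine ⟨C, fun v hv hvc ↦ ?_⟩
    simp only [← hn, Nat.cast_one, inv_one, sub_self, ENNReal.ofReal_zero, ENNReal.inv_zero,
      eLpNorm_exponent_top, eLpNorm_one_eq_lintegral_enorm]
    exact eLpNormEssSup_le_of_ae_enorm_bound (.of_forall (hC v hv hvc))
  · have hn' : (1 : ℝ) < finrank ℝ E := by exact_mod_cast hn
    have hpos : 0 < 1 - (finrank ℝ E : ℝ)⁻¹ := sub_pos.2 (inv_lt_one_of_one_lt₀ hn')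
    let p : ℝ≥0 := (1 - (finrank ℝ E : ℝ)⁻¹).toNNReal⁻¹
    have hp : NNReal.HolderConjugate (finrank ℝ E) p := by
      rw [← NNReal.holderConjugate_coe_iff, Real.holderConjugate_iff]
      simp [p, hn', hpos.le]
    refine ⟨eLpNormLESNormFDerivOneConst μ p, fun v hv hvc ↦ ?_⟩
    have hp' : (ENNReal.ofReal (1 - (finrank ℝ E : ℝ)⁻¹))⁻¹ = p := by
      rw [ENNReal.ofReal, ENNReal.coe_inv (by simpa using hpos)]
    rw [hp']
    exact eLpNorm_le_eLpNorm_fderiv_one μ hv hvc hp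

end GagliardoNirenbergSobolev

section JetNorm

variable [NormedSpace ℝ E]

/-- The size `‖∇u(x)‖ + |u(x)| / |x|` of the first-order jet of `u` at the scale `|x|`; since
`t / 0 = 0`, it is `‖∇u(0)‖` at the origin. It is the density that a weighted Sobolev inequality
produces from the derivative of `|x|^δ u`. -/
noncomputable def jetNorm (u : E → ℝ) (x : E) : ℝ :=
  ‖fderiv ℝ u x‖ + |u x| / ‖x‖

lemma jetNorm_nonneg (u : E → ℝ) (x : E) : 0 ≤ jetNorm u x := by
  unfold jetNorm; positivity

lemma aestronglyMeasurable_jetNorm [MeasurableSpace E] [BorelSpace E]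
    {μ : Measure E} {u : E → ℝ} (hu : Continuous u) : AEStronglyMeasurable (jetNorm u) μ := by
  have := hu.measurable
  exact (by unfold jetNorm; fun_prop : Measurable (jetNorm u)).aestronglyMeasurable

lemma weightedNorm_sub_one_le_weightedNorm_jetNorm [MeasurableSpace E] (μ : Measure E)
    [NullSingletonClass μ] (δ τ : ℝ) (u : E → ℝ) :
    weightedNorm μ (δ - 1) τ u ≤ weightedNorm μ δ τ (jetNorm u) := by
  refine eLpNorm_mono_ae ?_
  filter_upwards [Measure.ae_ne μ 0] with x hx
  have hx' : 0 < ‖x‖ := norm_pos_iff.2 hx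
  rw [norm_mul, norm_mul, Real.norm_of_nonneg (jetNorm_nonneg u x), Real.rpow_sub_one hx'.ne',
    norm_div, norm_norm, Real.norm_eq_abs (u x), div_mul_eq_mul_div, mul_div_assoc]
  exact mul_le_mul_of_nonneg_left (le_add_of_nonneg_left (norm_nonneg _)) (norm_nonneg _)

end JetNorm

section HardySobolev

variable [InnerProductSpace ℝ E]

lemma contDiff_norm_rpow_mul {u : E → ℝ} (hu : ContDiff ℝ 1 u) (h₀ : 0 ∉ tsupport u) (δ : ℝ) :
    ContDiff ℝ 1 fun x ↦ ‖x‖ ^ δ * u x := by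
  refine contDiff_iff_contDiffAt.2 fun x ↦ ?_
  by_cases hx : x ∈ tsupport u
  · have hx₀ : x ≠ 0 := fun h ↦ h₀ (h ▸ hx)
    exact ((contDiffAt_norm ℝ hx₀).rpow_const_of_ne (norm_ne_zero_iff.2 hx₀)).mul hu.contDiffAt
  · have hzero : (fun y ↦ ‖y‖ ^ δ * u y) =ᶠ[𝓝 x] fun _ ↦ 0 :=
      (notMem_tsupport_iff_eventuallyEq.1 hx).mono fun y hy ↦ by simp [hy]
    exact contDiffAt_const.congr_of_eventuallyEq hzero

lemma norm_fderiv_norm_rpow_mul_le {u : E → ℝ} {x : E} (hu : DifferentiableAt ℝ u x) (hx : x ≠ 0)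
    (δ : ℝ) : ‖fderiv ℝ (fun y ↦ ‖y‖ ^ δ * u y) x‖ ≤ (1 + |δ|) * (‖x‖ ^ δ * jetNorm u x) := by
  have hx' : 0 < ‖x‖ := norm_pos_iff.2 hx
  have hnorm : HasFDerivAt (fun y : E ↦ ‖y‖) (fderiv ℝ (fun y : E ↦ ‖y‖) x) x :=
    ((contDiffAt_norm ℝ hx).differentiableAt one_ne_zero).hasFDerivAt
  have hnorm_le : ‖fderiv ℝ (fun y : E ↦ ‖y‖) x‖ ≤ 1 := by
    simpa using norm_fderiv_le_of_lipschitz ℝ (lipschitzWith_one_norm (E := E)) (x₀ := x)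
  have hderiv := ((hnorm.rpow_const (p := δ) (.inl hx'.ne')).fun_mul hu.hasFDerivAt).fderiv
  rw [hderiv]
  refine (norm_add_le _ _).trans ?_
  simp only [norm_smul, norm_mul, Real.norm_eq_abs, jetNorm, Real.rpow_sub_one hx'.ne',
    abs_of_pos (Real.rpow_pos_of_pos hx' _), abs_div, abs_norm]
  calc _ ≤ ‖x‖ ^ δ * ‖fderiv ℝ u x‖ + |u x| * (|δ| * (‖x‖ ^ δ / ‖x‖) * 1) := by gcongr
    _ ≤ _ := by
      have h₁ : 0 ≤ |δ| * (‖x‖ ^ δ * ‖fderiv ℝ u x‖) := by positivity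
      have h₂ : 0 ≤ ‖x‖ ^ δ * (|u x| / ‖x‖) := by positivity
      ring_nf at h₁ h₂ ⊢
      linarith

variable [FiniteDimensional ℝ E] [MeasurableSpace E] [BorelSpace E] [Nontrivial E]
  (μ : Measure E) [μ.IsAddHaarMeasure]

lemma exists_weightedNorm_le_weightedNorm_jetNorm_of_endpoint (δ : ℝ) :
    ∃ C : ℝ≥0, ∀ u : E → ℝ, ContDiff ℝ 1 u → HasCompactSupport u → 0 ∉ tsupport u →
      weightedNorm μ δ (1 - (finrank ℝ E : ℝ)⁻¹) u ≤ C * weightedNorm μ δ 1 (jetNorm u) := by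
  obtain ⟨C, hC⟩ := exists_eLpNorm_le_eLpNorm_fderiv_one μ
  refine ⟨C * (1 + ‖δ‖₊), fun u hu huc h₀ ↦ ?_⟩
  refine (hC _ (contDiff_norm_rpow_mul hu h₀ δ) huc.mul_left).trans ?_
  rw [ENNReal.coe_mul, mul_assoc, weightedNorm, ENNReal.ofReal_one, inv_one]
  gcongr
  refine eLpNorm_le_nnreal_smul_eLpNorm_of_ae_le_mul ?_ _
  filter_upwards [Measure.ae_ne μ 0] with x hx
  rw [← NNReal.coe_le_coe]
  push_cast
  rw [Real.norm_of_nonneg (r := ‖x‖ ^ δ * jetNorm u x)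
    (mul_nonneg (by positivity) (jetNorm_nonneg u x))]
  exact norm_fderiv_norm_rpow_mul_le (hu.differentiable one_ne_zero x) hx δ

lemma exists_weightedNorm_le_weightedNorm_jetNorm_one {κ τ δ : ℝ}
    (hτ₀ : 1 - (finrank ℝ E : ℝ)⁻¹ ≤ τ) (hτ₁ : τ ≤ 1)
    (hscale : κ + finrank ℝ E * τ = δ - 1 + finrank ℝ E) :
    ∃ C : ℝ≥0, ∀ u : E → ℝ, ContDiff ℝ 1 u → HasCompactSupport u → 0 ∉ tsupport u →
      weightedNorm μ κ τ u ≤ C * weightedNorm μ δ 1 (jetNorm u) := by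
  obtain ⟨C, hC⟩ := exists_weightedNorm_le_weightedNorm_jetNorm_of_endpoint μ δ
  have hn : (1 : ℝ) ≤ finrank ℝ E := by exact_mod_cast finrank_pos (R := ℝ) (M := E)
  obtain ⟨θ, hθ⟩ : ∃ θ : ℝ, θ = finrank ℝ E * (1 - τ) := ⟨_, rfl⟩
  have hθ₀ : 0 ≤ θ := hθ ▸ mul_nonneg (by positivity) (sub_nonneg.2 hτ₁)
  have hθ₁ : θ ≤ 1 := by
    rw [hθ, ← le_inv_mul_iff₀ (by positivity)]
    linarith
  have hτ : τ = θ * (1 - (finrank ℝ E : ℝ)⁻¹) + (1 - θ) * 1 := by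
    rw [hθ]; field_simp; ring
  have hκ : κ = θ * δ + (1 - θ) * (δ - 1) := by linarith
  refine ⟨max C 1, fun u hu huc h₀ ↦ ?_⟩
  have hendpoint : weightedNorm μ δ (1 - (finrank ℝ E : ℝ)⁻¹) u ≤
      (max C 1 : ℝ≥0) * weightedNorm μ δ 1 (jetNorm u) :=
    (hC u hu huc h₀).trans (by gcongr; exact le_max_left _ _)
  have hhardy : weightedNorm μ (δ - 1) 1 u ≤
      (max C 1 : ℝ≥0) * weightedNorm μ δ 1 (jetNorm u) :=
    (weightedNorm_sub_one_le_weightedNorm_jetNorm μ δ 1 u).trans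
      (le_mul_of_one_le_left' (by exact_mod_cast le_max_right C 1))
  calc weightedNorm μ κ τ u
      ≤ weightedNorm μ δ (1 - (finrank ℝ E : ℝ)⁻¹) u ^ θ *
          weightedNorm μ (δ - 1) 1 u ^ (1 - θ) := by
        rw [hκ, hτ]
        exact weightedNorm_interpolation hθ₀ hθ₁ hu.continuous.aestronglyMeasurable
          (sub_nonneg.2 (inv_le_one_of_one_le₀ hn)) zero_le_one
    _ ≤ ((max C 1 : ℝ≥0) * weightedNorm μ δ 1 (jetNorm u)) ^ θ *
          ((max C 1 : ℝ≥0) * weightedNorm μ δ 1 (jetNorm u)) ^ (1 - θ) :=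
        mul_le_mul' (ENNReal.rpow_le_rpow hendpoint hθ₀)
          (ENNReal.rpow_le_rpow hhardy (sub_nonneg.2 hθ₁))
    _ = (max C 1 : ℝ≥0) * weightedNorm μ δ 1 (jetNorm u) := by
        rw [← ENNReal.rpow_add_of_nonneg _ _ hθ₀ (sub_nonneg.2 hθ₁), add_sub_cancel,
          ENNReal.rpow_one]

end HardySobolev

section ExponentArithmetic

variable {n α β γ σ ω ρ a ν : ℝ}

lemma eq_sub_div_of_scaling (hn : 0 < n)
    (hscale : γ + n * ρ = a * (α - 1 + n * σ) + (1 - a) * (β + n * ω)) :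
    ρ = a * σ + (1 - a) * ω - (a - (-γ + a * α + (1 - a) * β)) / n := by
  field_simp
  linarith

lemma inv_add_mul_eq_of_scaling (hn : 0 < n) (ha : 0 < a)
    (hholder : σ + (a⁻¹ - 1) * ω + ν * ρ = 1)
    (hscale : γ + n * ρ = a * (α - 1 + n * σ) + (1 - a) * (β + n * ω)) :
    (a⁻¹ + ν) * ρ = 1 - n⁻¹ + (-γ + a * α + (1 - a) * β) / a * n⁻¹ := by
  rw [add_mul, eq_sub_of_add_eq' hholder, eq_sub_div_of_scaling hn hscale]
  field_simp
  ring

lemma inv_add_mul_add_eq_of_scaling (ha : 0 < a)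
    (hholder : σ + (a⁻¹ - 1) * ω + ν * ρ = 1)
    (hscale : γ + n * ρ = a * (α - 1 + n * σ) + (1 - a) * (β + n * ω)) :
    (a⁻¹ + ν) * γ + n * ((a⁻¹ + ν) * ρ) = α + (a⁻¹ - 1) * β + ν * γ - 1 + n := by
  have hdiv : a⁻¹ * (γ + n * ρ) = (α - 1 + n * σ) + (a⁻¹ - 1) * (β + n * ω) := by
    rw [hscale]
    field_simp
  linear_combination hdiv + n * hholder

lemma exists_eq_mul_of_one_lt_add (ha₀ : 0 < a) (hσ : σ ≤ 1) (hω : 0 ≤ ω)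
    (h : 1 < σ + (a⁻¹ - 1) * ω) :
    ∃ θ b : ℝ, 0 < θ ∧ θ ≤ 1 ∧ 0 < b ∧ b ≤ 1 ∧ a = θ * b ∧ σ + (b⁻¹ - 1) * ω = 1 := by
  have hω₀ : 0 < ω := hω.lt_of_ne fun h₀ ↦ by simp [← h₀] at h; linarith
  have hd : 0 < 1 - σ + ω := by linarith
  have had : a * (1 - σ + ω) ≤ ω := by
    have := mul_lt_mul_of_pos_left h ha₀
    have hcancel : a * ((a⁻¹ - 1) * ω) = ω - a * ω := by field_simp
    linarith
  refine ⟨a * (1 - σ + ω) / ω, ω / (1 - σ + ω), by positivity, (div_le_one hω₀).2 had,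
    by positivity, (div_le_one hd).2 (by linarith), by field_simp, ?_⟩
  rw [inv_div]
  field_simp
  ring

end ExponentArithmetic

section PuncturedSpace

lemma rpow_le_of_rpow_add_le_mul_rpow {X B : ℝ≥0∞} {s t : ℝ} (hs : 0 < s) (ht : 0 ≤ t)
    (hX : X ≠ ∞) (h : X ^ (s + t) ≤ B * X ^ t) : X ^ s ≤ B := by
  rcases eq_or_ne X 0 with rfl | hX₀
  · simp [hs]
  · have hXt₀ : X ^ t ≠ 0 := (ENNReal.rpow_pos (pos_iff_ne_zero.2 hX₀) hX).ne'
    rw [ENNReal.rpow_add_of_nonneg _ _ hs.le ht] at h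
    exact (ENNReal.mul_le_mul_iff_left hXt₀ (ENNReal.rpow_ne_top_of_nonneg ht hX)).1 h

lemma jetNorm_abs_rpow_le [NormedSpace ℝ E] {u : E → ℝ} (hu : Differentiable ℝ u) {s : ℝ}
    (hs : 1 < s) (x : E) :
    jetNorm (fun y ↦ |u y| ^ s) x ≤ s * (jetNorm u x * |u x| ^ (s - 1)) := by
  have hfderiv : ‖fderiv ℝ (fun y ↦ |u y| ^ s) x‖ ≤ s * |u x| ^ (s - 1) * ‖fderiv ℝ u x‖ := by
    simpa using norm_fderiv_norm_rpow_le hu hs (x := x)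
  have hpow : |u x| ^ s = |u x| ^ (s - 1) * |u x| := by
    rw [← Real.rpow_add_one' (abs_nonneg _) (by linarith), sub_add_cancel]
  have hdiv : |u x| ^ s / ‖x‖ ≤ s * |u x| ^ (s - 1) * (|u x| / ‖x‖) := by
    rw [hpow, mul_div_assoc, mul_assoc]
    exact le_mul_of_one_le_left (by positivity) hs.le
  calc _ ≤ s * |u x| ^ (s - 1) * ‖fderiv ℝ u x‖ + s * |u x| ^ (s - 1) * (|u x| / ‖x‖) := by
        rw [jetNorm, abs_of_nonneg (by positivity)]
        exact add_le_add hfderiv hdiv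
    _ = _ := by rw [jetNorm]; ring

variable [InnerProductSpace ℝ E] [MeasurableSpace E] [BorelSpace E]

lemma weightedNorm_ne_top_of_notMem_tsupport {μ : Measure E} [IsFiniteMeasureOnCompacts μ]
    {u : E → ℝ} (hu : ContDiff ℝ 1 u) (huc : HasCompactSupport u) (h₀ : 0 ∉ tsupport u) (κ τ : ℝ) :
    weightedNorm μ κ τ u ≠ ∞ :=
  ((contDiff_norm_rpow_mul hu h₀ κ).continuous.memLp_of_hasCompactSupport huc.mul_left).2.ne

variable [FiniteDimensional ℝ E] [Nontrivial E] (μ : Measure E) [μ.IsAddHaarMeasure]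

lemma exists_weightedNorm_abs_rpow_le {κ τ δ s : ℝ} (hs : 1 ≤ s)
    (hτ₀ : 1 - (finrank ℝ E : ℝ)⁻¹ ≤ τ) (hτ₁ : τ ≤ 1)
    (hscale : κ + finrank ℝ E * τ = δ - 1 + finrank ℝ E) :
    ∃ C : ℝ≥0, ∀ u : E → ℝ, ContDiff ℝ 1 u → HasCompactSupport u → 0 ∉ tsupport u →
      weightedNorm μ κ τ (fun x ↦ |u x| ^ s) ≤
        C * weightedNorm μ δ 1 (fun x ↦ jetNorm u x * |u x| ^ (s - 1)) := by
  obtain ⟨C, hC⟩ := exists_weightedNorm_le_weightedNorm_jetNorm_one μ hτ₀ hτ₁ hscale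
  rcases hs.eq_or_lt with rfl | hs
  · refine ⟨C, fun u hu huc h₀ ↦ ?_⟩
    simpa [weightedNorm_congr_abs (u := fun x ↦ |u x|) (v := u) (by simp)] using hC u hu huc h₀
  · refine ⟨C * s.toNNReal, fun u hu huc h₀ ↦ ?_⟩
    have hs₀ : (0 : ℝ) ^ s = 0 := Real.zero_rpow (by linarith)
    have hsupp : tsupport (fun x ↦ |u x| ^ s) ⊆ tsupport u :=
      tsupport_comp_subset (g := fun y : ℝ ↦ |y| ^ s) (by simpa using hs₀) u
    refine (hC _ (by simpa using hu.norm_rpow hs) (huc.mono' (subset_closure.trans hsupp))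
      fun h ↦ h₀ (hsupp h)).trans ?_
    rw [ENNReal.coe_mul, mul_assoc]
    gcongr
    refine weightedNorm_le_mul (.of_forall fun x ↦ ?_)
    rw [abs_of_nonneg (jetNorm_nonneg _ _), Real.coe_toNNReal _ (by linarith),
      abs_of_nonneg (mul_nonneg (jetNorm_nonneg u x) (by positivity))]
    exact jetNorm_abs_rpow_le (hu.differentiable one_ne_zero) hs x

variable {α β γ σ ω ρ a : ℝ}

-- Sobolev for `|u|^s` with `s = 1/a + ν`, followed by Hölder on `jetNorm u * |u|^(s-1)` with
-- `|u|^(s-1)` split between the norms `(β, ω)` and `(γ, ρ)`; the latter is then absorbed.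
lemma exists_weightedNorm_le_of_notMem_tsupport_of_holder {ν : ℝ} (ha₀ : 0 < a) (ha₁ : a ≤ 1)
    (hσ : 0 ≤ σ) (hω : 0 ≤ ω) (hρ : 0 ≤ ρ) (hν : 0 ≤ ν) (hholder : σ + (a⁻¹ - 1) * ω + ν * ρ = 1)
    (hscale : γ + finrank ℝ E * ρ =
      a * (α - 1 + finrank ℝ E * σ) + (1 - a) * (β + finrank ℝ E * ω))
    (hΔ₀ : 0 ≤ -γ + a * α + (1 - a) * β) (hΔ₁ : -γ + a * α + (1 - a) * β ≤ a) :
    ∃ C : ℝ≥0, ∀ u : E → ℝ, ContDiff ℝ 1 u → HasCompactSupport u → 0 ∉ tsupport u →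
      weightedNorm μ γ ρ u ≤
        C * weightedNorm μ α σ (jetNorm u) ^ a * weightedNorm μ β ω u ^ (1 - a) := by
  have hn : (0 : ℝ) < finrank ℝ E := by exact_mod_cast finrank_pos
  have ha_inv : 1 ≤ a⁻¹ := (one_le_inv₀ ha₀).2 ha₁
  have hτ := inv_add_mul_eq_of_scaling hn ha₀ hholder hscale
  have hτ₀ : 1 - (finrank ℝ E : ℝ)⁻¹ ≤ (a⁻¹ + ν) * ρ := by
    rw [hτ, le_add_iff_nonneg_right]
    positivity
  have hτ₁ : (a⁻¹ + ν) * ρ ≤ 1 := by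
    have := mul_le_mul_of_nonneg_right ((div_le_one ha₀).2 hΔ₁) (inv_nonneg.2 hn.le)
    linarith
  obtain ⟨C, hC⟩ := exists_weightedNorm_abs_rpow_le μ (s := a⁻¹ + ν) (by linarith) hτ₀ hτ₁
    (inv_add_mul_add_eq_of_scaling ha₀ hholder hscale)
  refine ⟨C ^ a, fun u hu huc h₀ ↦ ?_⟩
  have hholder_le := weightedNorm_mul_rpow_add_le (μ := μ) (κ₀ := α) (κ₁ := β) (κ₂ := γ)
    (aestronglyMeasurable_jetNorm hu.continuous) hu.continuous.aestronglyMeasurable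
    hσ hω hρ (sub_nonneg.2 ha_inv) hν
  rw [hholder, sub_add_eq_add_sub] at hholder_le
  have habsorb : weightedNorm μ γ ρ u ^ a⁻¹ ≤
      C * (weightedNorm μ α σ (jetNorm u) * weightedNorm μ β ω u ^ (a⁻¹ - 1)) := by
    refine rpow_le_of_rpow_add_le_mul_rpow (inv_pos.2 ha₀) hν
      (weightedNorm_ne_top_of_notMem_tsupport hu huc h₀ γ ρ) ?_
    rw [← weightedNorm_abs_rpow (by positivity), mul_assoc]
    exact (hC u hu huc h₀).trans (mul_le_mul_right hholder_le _)
  rwa [ENNReal.rpow_inv_le_iff ha₀, ENNReal.mul_rpow_of_nonneg _ _ ha₀.le,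
    ENNReal.mul_rpow_of_nonneg _ _ ha₀.le, ← ENNReal.rpow_mul, sub_one_mul,
    inv_mul_cancel₀ ha₀.ne', ← ENNReal.coe_rpow_of_nonneg _ ha₀.le, ← mul_assoc] at habsorb

lemma exists_weightedNorm_le_of_notMem_tsupport (ha₀ : 0 < a) (ha₁ : a ≤ 1)
    (hσ : 0 ≤ σ) (hσ₁ : σ ≤ 1) (hω : 0 ≤ ω) (hρ : 0 < ρ)
    (hscale : γ + finrank ℝ E * ρ =
      a * (α - 1 + finrank ℝ E * σ) + (1 - a) * (β + finrank ℝ E * ω))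
    (hΔ₀ : 0 ≤ -γ + a * α + (1 - a) * β) (hΔ₁ : -γ + a * α + (1 - a) * β ≤ a) :
    ∃ C : ℝ≥0, ∀ u : E → ℝ, ContDiff ℝ 1 u → HasCompactSupport u → 0 ∉ tsupport u →
      weightedNorm μ γ ρ u ≤
        C * weightedNorm μ α σ (jetNorm u) ^ a * weightedNorm μ β ω u ^ (1 - a) := by
  rcases le_or_gt (σ + (a⁻¹ - 1) * ω) 1 with h | h
  · refine exists_weightedNorm_le_of_notMem_tsupport_of_holder μ ha₀ ha₁ hσ hω hρ.le
      (div_nonneg (sub_nonneg.2 h) hρ.le) ?_ hscale hΔ₀ hΔ₁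
    rw [div_mul_cancel₀ _ hρ.ne', add_sub_cancel]
  obtain ⟨θ, b, hθ₀, hθ₁, hb₀, hb₁, rfl, hb⟩ := exists_eq_mul_of_one_lt_add ha₀ hσ₁ hω h
  have hn : (1 : ℝ) ≤ finrank ℝ E := by exact_mod_cast finrank_pos (R := ℝ) (M := E)
  obtain ⟨γ', rfl⟩ : ∃ γ', γ = θ * γ' + (1 - θ) * β := ⟨(γ - (1 - θ) * β) / θ, by field_simp; ring⟩
  obtain ⟨ρ', rfl⟩ : ∃ ρ', ρ = θ * ρ' + (1 - θ) * ω := ⟨(ρ - (1 - θ) * ω) / θ, by field_simp; ring⟩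
  have hscale' : γ' + finrank ℝ E * ρ' =
      b * (α - 1 + finrank ℝ E * σ) + (1 - b) * (β + finrank ℝ E * ω) :=
    mul_left_cancel₀ hθ₀.ne' (by linear_combination hscale)
  have hΔ : -(θ * γ' + (1 - θ) * β) + θ * b * α + (1 - θ * b) * β =
      θ * (-γ' + b * α + (1 - b) * β) := by ring
  rw [hΔ] at hΔ₀ hΔ₁
  replace hΔ₀ := nonneg_of_mul_nonneg_right hΔ₀ hθ₀
  replace hΔ₁ := le_of_mul_le_mul_left hΔ₁ hθ₀
  have hρ' : 0 ≤ ρ' := by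
    have hτ := inv_add_mul_eq_of_scaling (ν := 0) (by linarith) hb₀ (by simpa using hb) hscale'
    have : 0 ≤ b⁻¹ * ρ' := by
      rw [← add_zero b⁻¹, hτ]
      exact add_nonneg (sub_nonneg.2 (inv_le_one_of_one_le₀ hn)) (by positivity)
    exact nonneg_of_mul_nonneg_right this (inv_pos.2 hb₀)
  obtain ⟨C, hC⟩ := exists_weightedNorm_le_of_notMem_tsupport_of_holder μ hb₀ hb₁ hσ hω hρ' le_rfl
    (by simpa using hb) hscale' hΔ₀ hΔ₁
  refine ⟨C ^ θ, fun u hu huc h₀ ↦ ?_⟩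
  rw [ENNReal.coe_rpow_of_nonneg _ hθ₀.le]
  exact weightedNorm_le_of_interpolation hu.continuous.aestronglyMeasurable hb₁ hθ₀.le hθ₁ hρ' hω
    (hC u hu huc h₀)

end PuncturedSpace

section Cutoff

lemma jetNorm_mul_le [NormedSpace ℝ E] {χ u : E → ℝ} {x : E} {M : ℝ} (hχ : DifferentiableAt ℝ χ x)
    (hu : DifferentiableAt ℝ u x) (hx : x ≠ 0) (hχ₁ : |χ x| ≤ 1) (hM : ‖fderiv ℝ χ x‖ * ‖x‖ ≤ M) :
    jetNorm (fun y ↦ χ y * u y) x ≤ (1 + M) * jetNorm u x := by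
  have hx' : 0 < ‖x‖ := norm_pos_iff.2 hx
  have hM₀ : 0 ≤ M := le_trans (by positivity) hM
  have hfderiv : ‖fderiv ℝ (fun y ↦ χ y * u y) x‖ ≤ ‖fderiv ℝ u x‖ + M * (|u x| / ‖x‖) := by
    rw [fderiv_fun_mul hχ hu]
    refine (norm_add_le _ _).trans ?_
    rw [norm_smul, norm_smul, Real.norm_eq_abs, Real.norm_eq_abs, mul_comm |u x|]
    refine add_le_add (mul_le_of_le_one_left (norm_nonneg _) hχ₁) ?_
    rw [mul_div_left_comm, mul_comm |u x|]
    exact mul_le_mul_of_nonneg_right ((le_div_iff₀ hx').2 hM) (abs_nonneg _)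
  have hdiv : |χ x * u x| / ‖x‖ ≤ |u x| / ‖x‖ := by
    rw [abs_mul]
    gcongr
    exact mul_le_of_le_one_left (abs_nonneg _) hχ₁
  have : 0 ≤ M * ‖fderiv ℝ u x‖ := by positivity
  unfold jetNorm
  linarith

variable [InnerProductSpace ℝ E] [FiniteDimensional ℝ E]

variable (E) in
lemma exists_contDiff_hasCompactSupport_one_sub :
    ∃ ψ : E → ℝ, ContDiff ℝ 1 ψ ∧ 0 ∉ tsupport ψ ∧ (∀ x, |ψ x| ≤ 1) ∧
      HasCompactSupport fun x ↦ 1 - ψ x := by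
  let b : ContDiffBump (0 : E) := ⟨1, 2, one_pos, one_lt_two⟩
  refine ⟨fun x ↦ 1 - b x, contDiff_const.sub b.contDiff, ?_, fun x ↦ ?_, ?_⟩
  · rw [notMem_tsupport_iff_eventuallyEq]
    filter_upwards [Metric.closedBall_mem_nhds (0 : E) one_pos] with x hx
    simp [b.one_of_mem_closedBall hx]
  · rw [abs_of_nonneg (sub_nonneg.2 b.le_one)]
    linarith [b.nonneg' x]
  · simpa using b.hasCompactSupport

variable (E) in
lemma exists_cutoff :
    ∃ (M : ℝ≥0) (χ : ℕ → E → ℝ), (∀ k, ContDiff ℝ 1 (χ k) ∧ 0 ∉ tsupport (χ k)) ∧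
      (∀ k x, |χ k x| ≤ 1 ∧ ‖fderiv ℝ (χ k) x‖ * ‖x‖ ≤ M) ∧
      ∀ x ≠ 0, Tendsto (fun k ↦ χ k x) atTop (𝓝 1) := by
  obtain ⟨ψ, hψ, hψ₀, hψ₁, hψc⟩ :=
    exists_contDiff_hasCompactSupport_one_sub E
  have hfderiv (y : E) : fderiv ℝ (fun x ↦ 1 - ψ x) y = -fderiv ℝ ψ y := by
    rw [fderiv_fun_sub (by fun_prop) (hψ.differentiable one_ne_zero y)]
    simp
  obtain ⟨M, hM⟩ : ∃ M, ∀ y, ‖‖fderiv ℝ ψ y‖ * ‖y‖‖ ≤ M := by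
    refine Continuous.bounded_above_of_compact_support
      ((hψ.continuous_fderiv one_ne_zero).norm.mul continuous_norm) ?_
    have hsupp := (hψc.fderiv ℝ).norm.mul_right (f' := fun y ↦ ‖y‖)
    simp only [hfderiv, norm_neg] at hsupp
    exact hsupp
  refine ⟨M.toNNReal, fun k x ↦ ψ ((k + 1 : ℝ) • x), fun k ↦ ⟨by fun_prop, fun h ↦ hψ₀ ?_⟩,
    fun k x ↦ ⟨hψ₁ _, ?_⟩, fun x hx ↦ ?_⟩
  · simpa using tsupport_comp_subset_preimage ψ (continuous_const_smul (k + 1 : ℝ)) h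
  · calc ‖fderiv ℝ (fun x ↦ ψ ((k + 1 : ℝ) • x)) x‖ * ‖x‖
        = ‖fderiv ℝ ψ ((k + 1 : ℝ) • x)‖ * ‖(k + 1 : ℝ) • x‖ := by
          rw [fderiv_comp_smul, norm_smul, norm_smul]; ring
      _ ≤ M.toNNReal := (le_abs_self _).trans ((hM _).trans (Real.le_coe_toNNReal M))
  · have hnorm : Tendsto (fun k : ℕ ↦ ‖(k + 1 : ℝ) • x‖) atTop atTop := by
      simp only [norm_smul, Real.norm_of_nonneg (Nat.cast_add_one_pos _).le]
      exact (tendsto_atTop_add_const_right _ 1 tendsto_natCast_atTop_atTop).atTop_mul_const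
        (norm_pos_iff.2 hx)
    have hψ_eq : ∀ᶠ y in Bornology.cobounded E, ψ y = 1 := by
      rw [Metric.cobounded_eq_cocompact]
      filter_upwards [hψc.isCompact.compl_mem_cocompact] with y hy
      exact (sub_eq_zero.1 (image_eq_zero_of_notMem_tsupport (f := fun y ↦ 1 - ψ y) hy)).symm
    exact tendsto_const_nhds.congr'
      (((tendsto_norm_atTop_iff_cobounded.1 hnorm).eventually hψ_eq).mono fun _ h ↦ h.symm)

variable [MeasurableSpace E] [BorelSpace E] [Nontrivial E] (μ : Measure E) [μ.IsAddHaarMeasure]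
  {α β γ σ ω ρ a : ℝ}

lemma exists_weightedNorm_le_weightedNorm_jetNorm (ha₀ : 0 < a) (ha₁ : a ≤ 1)
    (hσ : 0 ≤ σ) (hσ₁ : σ ≤ 1) (hω : 0 ≤ ω) (hρ : 0 < ρ)
    (hscale : γ + finrank ℝ E * ρ =
      a * (α - 1 + finrank ℝ E * σ) + (1 - a) * (β + finrank ℝ E * ω))
    (hΔ₀ : 0 ≤ -γ + a * α + (1 - a) * β) (hΔ₁ : -γ + a * α + (1 - a) * β ≤ a) :
    ∃ C : ℝ≥0, ∀ u : E → ℝ, ContDiff ℝ 1 u → HasCompactSupport u →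
      weightedNorm μ γ ρ u ≤
        C * weightedNorm μ α σ (jetNorm u) ^ a * weightedNorm μ β ω u ^ (1 - a) := by
  obtain ⟨C, hC⟩ := exists_weightedNorm_le_of_notMem_tsupport μ ha₀ ha₁ hσ hσ₁ hω hρ hscale hΔ₀ hΔ₁
  obtain ⟨M, χ, hχ, hχ_le, hχ_lim⟩ := exists_cutoff E
  refine ⟨C * (1 + M) ^ a, fun u hu huc ↦ ?_⟩
  refine weightedNorm_le_of_tendsto (w := fun k x ↦ χ k x * u x)
    (fun k ↦ ((hχ k).1.continuous.mul hu.continuous).aestronglyMeasurable) ?_ fun k ↦ ?_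
  · filter_upwards [Measure.ae_ne μ 0] with x hx
    simpa using (hχ_lim x hx).mul_const (u x)
  have hjet : weightedNorm μ α σ (jetNorm fun x ↦ χ k x * u x) ≤
      (1 + M : ℝ≥0) * weightedNorm μ α σ (jetNorm u) := by
    refine weightedNorm_le_mul ?_
    filter_upwards [Measure.ae_ne μ 0] with x hx
    rw [abs_of_nonneg (jetNorm_nonneg _ _), abs_of_nonneg (jetNorm_nonneg _ _)]
    exact jetNorm_mul_le ((hχ k).1.differentiable one_ne_zero x) (hu.differentiable one_ne_zero x)
      hx (hχ_le k x).1 (hχ_le k x).2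
  have hmul : weightedNorm μ β ω (fun x ↦ χ k x * u x) ≤ weightedNorm μ β ω u :=
    weightedNorm_mono (.of_forall fun x ↦ by
      rw [abs_mul]; exact mul_le_of_le_one_left (abs_nonneg _) (hχ_le k x).1)
  calc weightedNorm μ γ ρ (fun x ↦ χ k x * u x)
      ≤ C * weightedNorm μ α σ (jetNorm fun x ↦ χ k x * u x) ^ a *
          weightedNorm μ β ω (fun x ↦ χ k x * u x) ^ (1 - a) :=
        hC _ ((hχ k).1.mul hu) huc.mul_left fun h ↦ (hχ k).2 (tsupport_mul_subset_left h)
    _ ≤ C * ((1 + M : ℝ≥0) * weightedNorm μ α σ (jetNorm u)) ^ a *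
          weightedNorm μ β ω u ^ (1 - a) := by
        gcongr
    _ = _ := by
        rw [ENNReal.mul_rpow_of_nonneg _ _ ha₀.le, ENNReal.coe_mul,
          ENNReal.coe_rpow_of_nonneg _ ha₀.le, ← mul_assoc (C : ℝ≥0∞)]

end Cutoff

section PowerWeights

variable [MeasurableSpace E] {μ : Measure E} {κ τ R : ℝ}

lemma weightedNorm_indicator_one_ne_top {S : Set E} (hτ : 0 < τ) (hS : MeasurableSet S)
    (h : IntegrableOn (fun x ↦ ‖x‖ ^ (κ * τ⁻¹)) S μ) :
    weightedNorm μ κ τ (S.indicator 1) ≠ ∞ := by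
  have hind (x : E) : ‖‖x‖ ^ κ * S.indicator (1 : E → ℝ) x‖ₑ ^ τ⁻¹ =
      ‖S.indicator (fun x ↦ ‖x‖ ^ (κ * τ⁻¹)) x‖ₑ := by
    by_cases hx : x ∈ S
    · simp [hx, Real.rpow_mul, Real.enorm_rpow_of_nonneg, Real.rpow_nonneg, hτ.le]
    · simp [hx, hτ]
  have hpow : weightedNorm μ κ τ (S.indicator 1) ^ τ⁻¹ < ∞ := by
    simp only [weightedNorm_rpow_inv hτ, hind]
    exact ((integrable_indicator_iff hS).2 h).2
  exact fun htop ↦ hpow.ne (by rw [htop, ENNReal.top_rpow_of_pos (inv_pos.2 hτ)])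

variable [NormedSpace ℝ E] [FiniteDimensional ℝ E] [Nontrivial E] [BorelSpace E]
  [μ.IsAddHaarMeasure]

lemma weightedNorm_indicator_ball_ne_top (hτ : 0 < τ) (h : 0 < κ + finrank ℝ E * τ) (R : ℝ) :
    weightedNorm μ κ τ ((Metric.ball 0 R).indicator 1) ≠ ∞ := by
  refine weightedNorm_indicator_one_ne_top hτ measurableSet_ball
    (integrableOn_ball_of_norm_le_rpow (C := 1) (α := -(κ * τ⁻¹)) finrank_pos ?_
      (.of_forall fun x ↦ ?_) (by fun_prop : Measurable _).aestronglyMeasurable)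
  · rw [neg_lt, ← div_eq_mul_inv, lt_div_iff₀ hτ]
    linarith
  · simp [Real.norm_of_nonneg (Real.rpow_nonneg (norm_nonneg x) _)]

lemma integrableOn_norm_rpow_compl_ball {s : ℝ} (hs : s < -finrank ℝ E) (hR : 0 < R) :
    IntegrableOn (fun x : E ↦ ‖x‖ ^ s) (Metric.ball 0 R)ᶜ μ := by
  have hint : Integrable (fun x : E ↦ (Ici R).indicator (fun y ↦ y ^ s) ‖x‖) μ := by
    rw [integrable_fun_norm_addHaar]
    have hrpow : IntegrableOn (fun y ↦ y ^ ((finrank ℝ E : ℝ) - 1 + s)) (Ici R) :=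
      (integrableOn_Ici_iff_integrableOn_Ioi).2 (integrableOn_Ioi_rpow_of_lt (by linarith) hR)
    refine (hrpow.integrable_indicator measurableSet_Ici).integrableOn.congr_fun (fun y hy ↦ ?_)
      measurableSet_Ioi
    by_cases hyR : R ≤ y
    · simp [hyR, Real.rpow_add (mem_Ioi.1 hy), ← Real.rpow_natCast, Nat.cast_sub finrank_pos]
    · simp [hyR]
  rw [← integrable_indicator_iff measurableSet_ball.compl]
  refine hint.congr (.of_forall fun x ↦ ?_)
  by_cases hx : R ≤ ‖x‖ <;> simp [hx]

lemma weightedNorm_indicator_compl_ball_ne_top (hτ : 0 < τ) (h : κ + finrank ℝ E * τ < 0)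
    (hR : 0 < R) : weightedNorm μ κ τ ((Metric.ball 0 R)ᶜ.indicator 1) ≠ ∞ := by
  refine weightedNorm_indicator_one_ne_top hτ measurableSet_ball.compl
    (integrableOn_norm_rpow_compl_ball ?_ hR)
  rw [← div_eq_mul_inv, div_lt_iff₀ hτ]
  linarith

lemma weightedNorm_ne_top (hτ : 0 < τ) (h : 0 < κ + finrank ℝ E * τ) {u : E → ℝ}
    (hu : Continuous u) (huc : HasCompactSupport u) : weightedNorm μ κ τ u ≠ ∞ := by
  obtain ⟨R, hR⟩ := huc.isCompact.isBounded.subset_ball (0 : E)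
  obtain ⟨C, hC⟩ := hu.bounded_above_of_compact_support huc
  have hbound (x : E) : |u x| ≤ C.toNNReal * |(Metric.ball 0 R).indicator (1 : E → ℝ) x| := by
    by_cases hx : x ∈ Metric.ball 0 R
    · simpa [hx] using .inl (hC x)
    · simp [image_eq_zero_of_notMem_tsupport fun h ↦ hx (hR h), hx]
  exact ((weightedNorm_le_mul (.of_forall hbound)).trans_lt
    (ENNReal.mul_lt_top ENNReal.coe_lt_top
      (weightedNorm_indicator_ball_ne_top hτ h R).lt_top)).ne

end PowerWeights

section DilationDifference

lemma le_inv_mul_of_le_add_mul {X Y ε : ℝ≥0∞} (hX : X ≠ ∞) (hε : ε < 1) (h : X ≤ Y + ε * X) :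
    X ≤ (1 - ε)⁻¹ * Y := by
  rw [← ENNReal.mul_le_iff_le_inv (tsub_pos_of_lt hε).ne' (by finiteness),
    ENNReal.sub_mul fun _ _ ↦ hX, one_mul]
  exact tsub_le_iff_right.2 h

lemma weightedNorm_le_of_enorm_le_lintegral [MeasurableSpace E] [OpensMeasurableSpace E]
    {T : Type*} [MeasurableSpace T] {μ : Measure E} [SFinite μ] (P : Measure T)
    [IsProbabilityMeasure P] {κ τ : ℝ} (hτ₀ : 0 < τ) (hτ₁ : τ ≤ 1) {v : E → ℝ} {w : T → E → ℝ}
    (hw : Measurable (Function.uncurry w)) (hv : ∀ᵐ x ∂μ, ‖v x‖ₑ ≤ ∫⁻ t, ‖w t x‖ₑ ∂P) {B : ℝ≥0∞}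
    (hB : ∀ᵐ t ∂P, weightedNorm μ κ τ (w t) ≤ B) : weightedNorm μ κ τ v ≤ B := by
  have hp : 1 ≤ τ⁻¹ := (one_le_inv₀ hτ₀).2 hτ₁
  have hp₀ : 0 < τ⁻¹ := inv_pos.2 hτ₀
  have hmeas : Measurable fun z : E × T ↦ ‖z.1‖ ^ κ * w z.2 z.1 :=
    (by fun_prop : Measurable fun z : E × T ↦ ‖z.1‖ ^ κ).mul (hw.comp measurable_swap)
  have hjensen : ∀ᵐ x ∂μ, ‖‖x‖ ^ κ * v x‖ₑ ^ τ⁻¹ ≤ ∫⁻ t, ‖‖x‖ ^ κ * w t x‖ₑ ^ τ⁻¹ ∂P := by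
    filter_upwards [hv] with x hx
    have hle : ‖‖x‖ ^ κ * v x‖ₑ ≤ ∫⁻ t, ‖‖x‖ ^ κ * w t x‖ₑ ∂P := by
      simp only [enorm_mul]
      rw [lintegral_const_mul' _ _ enorm_ne_top]
      gcongr
    have hLp := eLpNorm'_le_eLpNorm'_of_exponent_le one_pos hp P
      (hmeas.comp (measurable_prodMk_left (x := x))).aestronglyMeasurable
    simp only [eLpNorm', ENNReal.rpow_one, div_one, one_div, Function.comp_apply] at hLp
    exact (ENNReal.le_rpow_inv_iff hp₀).1 (hle.trans hLp)
  rw [← ENNReal.rpow_le_rpow_iff hp₀, weightedNorm_rpow_inv hτ₀]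
  calc ∫⁻ x, ‖‖x‖ ^ κ * v x‖ₑ ^ τ⁻¹ ∂μ
      ≤ ∫⁻ x, ∫⁻ t, ‖‖x‖ ^ κ * w t x‖ₑ ^ τ⁻¹ ∂P ∂μ := lintegral_mono_ae hjensen
    _ = ∫⁻ t, weightedNorm μ κ τ (w t) ^ τ⁻¹ ∂P := by
        rw [lintegral_lintegral_swap (hmeas.enorm.pow_const _).aemeasurable]
        simp only [weightedNorm_rpow_inv hτ₀]
    _ ≤ ∫⁻ _, B ^ τ⁻¹ ∂P :=
        lintegral_mono_ae (hB.mono fun t ht ↦ ENNReal.rpow_le_rpow ht hp₀.le)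
    _ = B ^ τ⁻¹ := by simp

lemma enorm_sub_comp_smul_div_norm_le [NormedSpace ℝ E] {u : E → ℝ} (hu : ContDiff ℝ 1 u)
    {x : E} (hx : x ≠ 0) :
    ‖|u x - u ((2 : ℝ) • x)| / ‖x‖‖ₑ ≤ ∫⁻ t in Ioc (1 : ℝ) 2, ‖fderiv ℝ u (t • x)‖ₑ := by
  have hderiv (t : ℝ) : HasDerivAt (fun s : ℝ ↦ u (s • x)) (fderiv ℝ u (t • x) x) t := by
    have hline : HasDerivAt (fun s : ℝ ↦ s • x) x t := by
      simpa using (hasDerivAt_id t).smul_const x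
    exact (hu.differentiable one_ne_zero (t • x)).hasFDerivAt.comp_hasDerivAt t hline
  have hcont : Continuous fun t : ℝ ↦ fderiv ℝ u (t • x) x :=
    ((hu.continuous_fderiv one_ne_zero).comp (by fun_prop)).clm_apply continuous_const
  have hftc : u ((2 : ℝ) • x) - u x = ∫ t in Ioc (1 : ℝ) 2, fderiv ℝ u (t • x) x := by
    rw [← intervalIntegral.integral_of_le one_le_two,
      intervalIntegral.integral_eq_sub_of_hasDerivAt (fun t _ ↦ hderiv t)
        (hcont.intervalIntegrable _ _), one_smul]
  rw [div_eq_mul_inv, enorm_mul, enorm_inv (norm_ne_zero_iff.2 hx), ← div_eq_mul_inv,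
    abs_sub_comm, hftc, Real.enorm_abs, enorm_norm]
  refine ENNReal.div_le_of_le_mul ((enorm_integral_le_lintegral_enorm _).trans ?_)
  rw [← lintegral_mul_const' _ _ enorm_ne_top]
  gcongr with t
  exact (fderiv ℝ u (t • x)).le_opENorm x

variable [NormedSpace ℝ E] [FiniteDimensional ℝ E] [MeasurableSpace E] [BorelSpace E]
  (μ : Measure E) [μ.IsAddHaarMeasure] {κ τ : ℝ}

lemma exists_weightedNorm_sub_comp_smul_le (κ : ℝ) (hτ₀ : 0 ≤ τ) (hτ₁ : τ ≤ 1) :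
    ∃ C : ℝ≥0, ∀ u : E → ℝ, Continuous u →
      (weightedNorm μ κ τ fun x ↦ u x - u ((2 : ℝ) • x)) ≤ C * weightedNorm μ κ τ u := by
  refine ⟨1 + Real.toNNReal (2 ^ (-(κ + finrank ℝ E * τ))), fun u hu ↦ ?_⟩
  have hu₂ : Continuous fun x ↦ -u ((2 : ℝ) • x) := (hu.comp (continuous_const_smul _)).neg
  calc weightedNorm μ κ τ (fun x ↦ u x - u ((2 : ℝ) • x))
      = weightedNorm μ κ τ (u + fun x ↦ -u ((2 : ℝ) • x)) := by
        simp only [sub_eq_add_neg, Pi.add_def]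
    _ ≤ weightedNorm μ κ τ u + weightedNorm μ κ τ (fun x ↦ -u ((2 : ℝ) • x)) :=
        weightedNorm_add_le hu.aestronglyMeasurable hu₂.aestronglyMeasurable hτ₁
    _ = _ := by
        rw [weightedNorm_congr_abs (u := fun x ↦ -u ((2 : ℝ) • x)) fun _ ↦ abs_neg _,
          weightedNorm_comp_smul hτ₀ two_pos]
        push_cast
        rw [add_mul, one_mul, ENNReal.ofReal]

variable [Nontrivial E]

lemma exists_weightedNorm_le_weightedNorm_sub_comp_smul (hτ₀ : 0 < τ) (hτ₁ : τ ≤ 1)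
    (h : 0 < κ + finrank ℝ E * τ) :
    ∃ C : ℝ≥0, ∀ u : E → ℝ, Continuous u → HasCompactSupport u →
      weightedNorm μ κ τ u ≤ C * weightedNorm μ κ τ fun x ↦ u x - u ((2 : ℝ) • x) := by
  obtain ⟨ε, hε⟩ : ∃ ε, ε = ENNReal.ofReal (2 ^ (-(κ + finrank ℝ E * τ))) := ⟨_, rfl⟩
  have hε₁ : ε < 1 :=
    hε ▸ ENNReal.ofReal_lt_one.2 (Real.rpow_lt_one_of_one_lt_of_neg one_lt_two (neg_lt_zero.2 h))
  refine ⟨(1 - ε)⁻¹.toNNReal, fun u hu huc ↦ ?_⟩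
  have hu₂ : Continuous fun x ↦ u ((2 : ℝ) • x) := hu.comp (continuous_const_smul _)
  rw [ENNReal.coe_toNNReal (ENNReal.inv_ne_top.2 (tsub_pos_of_lt hε₁).ne')]
  refine le_inv_mul_of_le_add_mul (weightedNorm_ne_top hτ₀ h hu huc) hε₁ ?_
  calc weightedNorm μ κ τ u
      = weightedNorm μ κ τ ((fun x ↦ u x - u ((2 : ℝ) • x)) + fun x ↦ u ((2 : ℝ) • x)) := by
        congr with x; simp
    _ ≤ _ := weightedNorm_add_le (hu.sub hu₂).aestronglyMeasurable hu₂.aestronglyMeasurable hτ₁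
    _ = _ := by rw [weightedNorm_comp_smul hτ₀.le two_pos, ← hε]

lemma exists_weightedNorm_sub_comp_smul_div_norm_le (κ : ℝ) (hτ₀ : 0 < τ) (hτ₁ : τ ≤ 1) :
    ∃ C : ℝ≥0, ∀ u : E → ℝ, ContDiff ℝ 1 u →
      (weightedNorm μ κ τ fun x ↦ |u x - u ((2 : ℝ) • x)| / ‖x‖) ≤
        C * weightedNorm μ κ τ fun x ↦ ‖fderiv ℝ u x‖ := by
  have hcont : ContinuousOn (fun t : ℝ ↦ t ^ (-(κ + finrank ℝ E * τ))) (Icc 1 2) := fun t ht ↦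
    (Real.continuousAt_rpow_const _ _ (.inl (by linarith [ht.1]))).continuousWithinAt
  obtain ⟨C, hC⟩ := isCompact_Icc.exists_bound_of_continuousOn hcont
  refine ⟨C.toNNReal, fun u hu ↦ ?_⟩
  have : IsProbabilityMeasure (volume.restrict (Ioc (1 : ℝ) 2)) := ⟨by norm_num⟩
  refine weightedNorm_le_of_enorm_le_lintegral (volume.restrict (Ioc (1 : ℝ) 2)) hτ₀ hτ₁
    (w := fun t x ↦ ‖fderiv ℝ u (t • x)‖) ?_ ?_ ?_
  · exact ((hu.continuous_fderiv one_ne_zero).comp (by fun_prop)).norm.measurable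
  · filter_upwards [Measure.ae_ne μ 0] with x hx
    simpa using enorm_sub_comp_smul_div_norm_le hu hx
  · filter_upwards [ae_restrict_mem measurableSet_Ioc] with t ht
    rw [weightedNorm_comp_smul (u := fun x ↦ ‖fderiv ℝ u x‖) hτ₀.le (by linarith [ht.1])]
    gcongr
    exact ENNReal.ofReal_le_ofReal ((le_abs_self _).trans (hC t (Ioc_subset_Icc_self ht)))

lemma exists_weightedNorm_jetNorm_sub_comp_smul_le (κ : ℝ) (hτ₀ : 0 < τ) (hτ₁ : τ ≤ 1) :
    ∃ C : ℝ≥0, ∀ u : E → ℝ, ContDiff ℝ 1 u →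
      weightedNorm μ κ τ (jetNorm fun x ↦ u x - u ((2 : ℝ) • x)) ≤
        C * weightedNorm μ κ τ fun x ↦ ‖fderiv ℝ u x‖ := by
  obtain ⟨C, hC⟩ := exists_weightedNorm_sub_comp_smul_div_norm_le μ κ hτ₀ hτ₁
  obtain ⟨D, hD⟩ : ∃ D : ℝ≥0, (D : ℝ≥0∞) = ENNReal.ofReal (2 ^ (-(κ + finrank ℝ E * τ))) :=
    ⟨_, rfl⟩
  refine ⟨1 + 2 * D + C, fun u hu ↦ ?_⟩
  have hfderiv : Continuous fun x ↦ ‖fderiv ℝ u x‖ := (hu.continuous_fderiv one_ne_zero).norm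
  have hfderiv₂ : Continuous fun x ↦ ‖fderiv ℝ u ((2 : ℝ) • x)‖ :=
    hfderiv.comp (continuous_const_smul _)
  have hquot : Measurable fun x ↦ |u x - u ((2 : ℝ) • x)| / ‖x‖ :=
    (hu.continuous.sub (hu.continuous.comp (continuous_const_smul _))).abs.measurable.div
      measurable_norm
  have hjet (x : E) : |jetNorm (fun y ↦ u y - u ((2 : ℝ) • y)) x| ≤
      |‖fderiv ℝ u x‖ + 2 * ‖fderiv ℝ u ((2 : ℝ) • x)‖ + |u x - u ((2 : ℝ) • x)| / ‖x‖| := by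
    have hdiff : Differentiable ℝ u := hu.differentiable one_ne_zero
    have hdiff₂ : DifferentiableAt ℝ (fun y ↦ u ((2 : ℝ) • y)) x := by fun_prop
    rw [abs_of_nonneg (jetNorm_nonneg _ _), abs_of_nonneg (by positivity), jetNorm,
      fderiv_fun_sub (hdiff x) hdiff₂, fderiv_comp_smul]
    gcongr
    exact (norm_sub_le _ _).trans_eq (by rw [norm_smul, Real.norm_two])
  calc weightedNorm μ κ τ (jetNorm fun x ↦ u x - u ((2 : ℝ) • x))
      ≤ weightedNorm μ κ τ ((fun x ↦ ‖fderiv ℝ u x‖ + 2 * ‖fderiv ℝ u ((2 : ℝ) • x)‖) +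
          fun x ↦ |u x - u ((2 : ℝ) • x)| / ‖x‖) := weightedNorm_mono (.of_forall hjet)
    _ ≤ weightedNorm μ κ τ (fun x ↦ ‖fderiv ℝ u x‖) +
          weightedNorm μ κ τ (fun x ↦ 2 * ‖fderiv ℝ u ((2 : ℝ) • x)‖) +
          weightedNorm μ κ τ (fun x ↦ |u x - u ((2 : ℝ) • x)| / ‖x‖) :=
        (weightedNorm_add_le (by fun_prop) hquot.aestronglyMeasurable hτ₁).trans
          (add_le_add_left (weightedNorm_add_le hfderiv.aestronglyMeasurable
            (hfderiv₂.const_mul 2).aestronglyMeasurable hτ₁) _)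
    _ ≤ weightedNorm μ κ τ (fun x ↦ ‖fderiv ℝ u x‖) +
          (2 : ℝ≥0) * (D * weightedNorm μ κ τ (fun x ↦ ‖fderiv ℝ u x‖)) +
          C * weightedNorm μ κ τ (fun x ↦ ‖fderiv ℝ u x‖) := by
        gcongr
        · rw [hD, ← weightedNorm_comp_smul hτ₀.le two_pos]
          exact weightedNorm_le_mul (.of_forall fun x ↦ by simp)
        · exact hC u hu
    _ = _ := by push_cast; ring

end DilationDifference

section Interpolation

variable [InnerProductSpace ℝ E] [FiniteDimensional ℝ E] [Nontrivial E] [MeasurableSpace E]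
  [BorelSpace E] (μ : Measure E) [μ.IsAddHaarMeasure]

lemma exists_weightedNorm_le_weightedNorm_fderiv {α β γ σ ω ρ a : ℝ} (ha₀ : 0 < a) (ha₁ : a ≤ 1)
    (hσ : 0 < σ) (hσ₁ : σ ≤ 1) (hω : 0 ≤ ω) (hω₁ : ω ≤ 1) (hρ : 0 < ρ)
    (hγ : 0 < γ + finrank ℝ E * ρ)
    (hscale : γ + finrank ℝ E * ρ =
      a * (α - 1 + finrank ℝ E * σ) + (1 - a) * (β + finrank ℝ E * ω))
    (hΔ₀ : 0 ≤ -γ + a * α + (1 - a) * β) (hΔ₁ : -γ + a * α + (1 - a) * β ≤ a) :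
    ∃ C : ℝ≥0, ∀ u : E → ℝ, ContDiff ℝ 1 u → HasCompactSupport u →
      weightedNorm μ γ ρ u ≤
        C * weightedNorm μ α σ (fun x ↦ ‖fderiv ℝ u x‖) ^ a * weightedNorm μ β ω u ^ (1 - a) := by
  have hρ₁ : ρ ≤ 1 := by
    have hdefect := div_nonneg (sub_nonneg.2 hΔ₁) (Nat.cast_nonneg (α := ℝ) (finrank ℝ E))
    have hρeq := eq_sub_div_of_scaling (Nat.cast_pos.2 finrank_pos) hscale
    nlinarith
  obtain ⟨C₀, hC₀⟩ := exists_weightedNorm_le_weightedNorm_sub_comp_smul μ hρ hρ₁ hγ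
  obtain ⟨C₁, hC₁⟩ := exists_weightedNorm_le_weightedNorm_jetNorm μ ha₀ ha₁ hσ.le hσ₁ hω hρ hscale
    hΔ₀ hΔ₁
  obtain ⟨C₂, hC₂⟩ := exists_weightedNorm_jetNorm_sub_comp_smul_le μ α hσ hσ₁
  obtain ⟨C₃, hC₃⟩ := exists_weightedNorm_sub_comp_smul_le μ β hω hω₁
  refine ⟨C₀ * (C₁ * C₂ ^ a * C₃ ^ (1 - a)), fun u hu huc ↦ ?_⟩
  have hdiff : ContDiff ℝ 1 fun x ↦ u x - u ((2 : ℝ) • x) :=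
    hu.sub (hu.comp (contDiff_const_smul _))
  have hsupp : HasCompactSupport fun x ↦ u x - u ((2 : ℝ) • x) :=
    huc.comp₂_left (huc.comp_smul two_ne_zero) (sub_zero 0)
  calc weightedNorm μ γ ρ u
      ≤ C₀ * weightedNorm μ γ ρ fun x ↦ u x - u ((2 : ℝ) • x) := hC₀ u hu.continuous huc
    _ ≤ C₀ * (C₁ * (C₂ * weightedNorm μ α σ fun x ↦ ‖fderiv ℝ u x‖) ^ a *
          (C₃ * weightedNorm μ β ω u) ^ (1 - a)) := by
        gcongr
        refine (hC₁ _ hdiff hsupp).trans ?_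
        gcongr
        · exact hC₂ u hu
        · exact hC₃ u hu.continuous
    _ = _ := by
        rw [ENNReal.mul_rpow_of_nonneg _ _ ha₀.le,
          ENNReal.mul_rpow_of_nonneg _ _ (sub_nonneg.2 ha₁)]
        push_cast [ENNReal.coe_rpow_of_nonneg _ ha₀.le,
          ENNReal.coe_rpow_of_nonneg _ (sub_nonneg.2 ha₁)]
        ring

end Interpolation

lemma sq_le_four_mul_mul_of_forall_le {X Y Z : ℝ≥0∞} (hY : Y ≠ ∞) (hZ : Z ≠ ∞)
    (h : ∀ t : ℝ≥0, t ≠ 0 → X ≤ t * Y + (t⁻¹ : ℝ≥0) * Z) : X ^ 2 ≤ 4 * (Y * Z) := by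
  have hX : X ≠ ∞ := ((h 1 one_ne_zero).trans_lt (by simp [hY.lt_top, hZ.lt_top])).ne
  lift X to ℝ≥0 using hX
  lift Y to ℝ≥0 using hY
  lift Z to ℝ≥0 using hZ
  have hquadratic (t : ℝ) : 0 ≤ (Y : ℝ) * (t * t) + -X * t + Z := by
    rcases le_or_gt t 0 with ht | ht
    · have hXt : 0 ≤ -X * t := mul_nonneg_of_nonpos_of_nonpos (neg_nonpos.2 X.2) ht
      exact add_nonneg (add_nonneg (mul_nonneg Y.2 (mul_self_nonneg t)) hXt) Z.2
    · lift t to ℝ≥0 using ht.le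
      have hX : (X : ℝ) ≤ t * Y + (t : ℝ)⁻¹ * Z := by
        exact_mod_cast h t (by exact_mod_cast ht.ne')
      have hmul := mul_le_mul_of_nonneg_left hX ht.le
      rw [mul_add, mul_inv_cancel_left₀ ht.ne'] at hmul
      linarith
  have hdiscrim := discrim_le_zero hquadratic
  rw [discrim, neg_sq, sub_nonpos, mul_assoc] at hdiscrim
  exact_mod_cast hdiscrim

lemma le_mul_rpow_of_sq_le {X Y Z J B : ℝ≥0∞} {C C₁ C₂ : ℝ≥0} {a δ : ℝ} (hl₀ : 0 ≤ a - δ)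
    (hl₁ : a - δ ≤ 1) (hr₀ : 0 ≤ a + δ) (hr₁ : a + δ ≤ 1) (hX : X ^ 2 ≤ C * (Y * Z))
    (hY : Y ≤ C₁ * J ^ (a - δ) * B ^ (1 - (a - δ)))
    (hZ : Z ≤ C₂ * J ^ (a + δ) * B ^ (1 - (a + δ))) :
    X ≤ NNReal.sqrt (C * C₁ * C₂) * J ^ a * B ^ (1 - a) := by
  rw [← ENNReal.pow_le_pow_left_iff two_ne_zero]
  calc X ^ 2
      ≤ C * ((C₁ * J ^ (a - δ) * B ^ (1 - (a - δ))) * (C₂ * J ^ (a + δ) * B ^ (1 - (a + δ)))) :=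
        hX.trans (by gcongr)
    _ = (C * C₁ * C₂) * (J ^ (a - δ) * J ^ (a + δ)) * (B ^ (1 - (a - δ)) * B ^ (1 - (a + δ))) := by
        ring
    _ = _ := by
        rw [mul_pow, mul_pow, ← ENNReal.coe_pow, NNReal.sq_sqrt, ← ENNReal.rpow_natCast,
          ← ENNReal.rpow_natCast, ← ENNReal.rpow_mul, ← ENNReal.rpow_mul,
          ← ENNReal.rpow_add_of_nonneg _ _ hl₀ hr₀,
          ← ENNReal.rpow_add_of_nonneg _ _ (sub_nonneg.2 hl₁) (sub_nonneg.2 hr₁)]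
        push_cast
        ring_nf

lemma exists_mul_pos_of_eventually_nhds {P : ℝ → Prop} {a D : ℝ} (hP : ∀ᶠ b in 𝓝 a, P b)
    (hD : D ≠ 0) : ∃ δ : ℝ, 0 < δ * D ∧ P (a - δ) ∧ P (a + δ) := by
  have hsub : Tendsto (fun t ↦ a - t * D) (𝓝[>] 0) (𝓝 a) :=
    tendsto_nhdsWithin_of_tendsto_nhds ((by fun_prop : Continuous fun t ↦ a - t * D).tendsto' _ _
      (by simp))
  have hadd : Tendsto (fun t ↦ a + t * D) (𝓝[>] 0) (𝓝 a) :=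
    tendsto_nhdsWithin_of_tendsto_nhds ((by fun_prop : Continuous fun t ↦ a + t * D).tendsto' _ _
      (by simp))
  obtain ⟨t, ht, hP₁, hP₂⟩ :=
    (eventually_mem_nhdsWithin.and ((hsub.eventually hP).and (hadd.eventually hP))).exists
  exact ⟨t * D, by rw [mul_assoc]; exact mul_pos ht (mul_self_pos.2 hD), hP₁, hP₂⟩

section MidpointInterpolation

variable [NormedSpace ℝ E] [FiniteDimensional ℝ E] [Nontrivial E] [MeasurableSpace E]
  [BorelSpace E] {μ : Measure E} [μ.IsAddHaarMeasure] {γ γ₁ γ₂ ρ ρ₁ ρ₂ : ℝ}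

lemma weightedNorm_indicator_smul_mul_le {S : Set E} (hS : MeasurableSet S) {u : E → ℝ}
    (hu : AEStronglyMeasurable u μ) (hρ₁ : 0 ≤ ρ₁) (hρ : ρ₁ ≤ ρ) {R : ℝ} (hR : 0 < R) :
    weightedNorm μ γ ρ (fun x ↦ S.indicator 1 (R⁻¹ • x) * u x) ≤
      ENNReal.ofReal (R ^ (γ + finrank ℝ E * ρ - (γ₁ + finrank ℝ E * ρ₁))) *
        weightedNorm μ (γ - γ₁) (ρ - ρ₁) (S.indicator 1) * weightedNorm μ γ₁ ρ₁ u := by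
  have hmeas : Measurable fun x : E ↦ S.indicator (1 : E → ℝ) (R⁻¹ • x) :=
    (measurable_one.indicator hS).comp (measurable_const_smul _)
  have hholder := weightedNorm_mul_le (κ₀ := γ - γ₁) (κ₁ := γ₁) hmeas.aestronglyMeasurable hu
    (sub_nonneg.2 hρ) hρ₁
  rw [sub_add_cancel, sub_add_cancel,
    weightedNorm_comp_smul (sub_nonneg.2 hρ) (inv_pos.2 hR)] at hholder
  convert hholder using 4
  rw [Real.inv_rpow hR.le, ← Real.rpow_neg hR.le]
  ring_nf

lemma weightedNorm_le_mul_add_indicator_compl {S : Set E} (hS : MeasurableSet S) {u : E → ℝ}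
    (hu : AEStronglyMeasurable u μ) (hρ₁ : 0 ≤ ρ₁) (h₁ : ρ₁ ≤ ρ) (hρ₂ : 0 ≤ ρ₂) (h₂ : ρ₂ ≤ ρ)
    {R : ℝ} (hR : 0 < R) :
    weightedNorm μ γ ρ u ≤ ENNReal.LpAddConst (ENNReal.ofReal ρ)⁻¹ *
      (ENNReal.ofReal (R ^ (γ + finrank ℝ E * ρ - (γ₁ + finrank ℝ E * ρ₁))) *
          weightedNorm μ (γ - γ₁) (ρ - ρ₁) (S.indicator 1) * weightedNorm μ γ₁ ρ₁ u +
        ENNReal.ofReal (R ^ (γ + finrank ℝ E * ρ - (γ₂ + finrank ℝ E * ρ₂))) *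
          weightedNorm μ (γ - γ₂) (ρ - ρ₂) (Sᶜ.indicator 1) * weightedNorm μ γ₂ ρ₂ u) := by
  have hmeas {T : Set E} (hT : MeasurableSet T) :
      AEStronglyMeasurable (fun x ↦ T.indicator (1 : E → ℝ) (R⁻¹ • x) * u x) μ :=
    ((measurable_one.indicator hT).comp
      (measurable_const_smul R⁻¹)).aestronglyMeasurable.mul hu
  have hsplit : u = (fun x ↦ S.indicator 1 (R⁻¹ • x) * u x) +
      fun x ↦ Sᶜ.indicator 1 (R⁻¹ • x) * u x := by
    ext x
    rw [Pi.add_apply, ← add_mul, indicator_self_add_compl_apply, Pi.one_apply, one_mul]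
  nth_rw 1 [hsplit]
  exact (weightedNorm_add_le' (hmeas hS) (hmeas hS.compl)).trans <| mul_le_mul_right
    (add_le_add (weightedNorm_indicator_smul_mul_le hS hu hρ₁ h₁ hR)
      (weightedNorm_indicator_smul_mul_le hS.compl hu hρ₂ h₂ hR)) _

-- Hölder against `(γ₁, ρ₁)` on the ball of radius `R` and against `(γ₂, ρ₂)` off it, with `R` free.
lemma exists_weightedNorm_sq_le (hρ₁ : 0 ≤ ρ₁) (hρ₂ : 0 ≤ ρ₂) (h₁ : ρ₁ < ρ) (h₂ : ρ₂ < ρ)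
    (hlt : γ₁ + finrank ℝ E * ρ₁ < γ + finrank ℝ E * ρ)
    (hmid : (γ₁ + finrank ℝ E * ρ₁) + (γ₂ + finrank ℝ E * ρ₂) = 2 * (γ + finrank ℝ E * ρ)) :
    ∃ C : ℝ≥0, ∀ u : E → ℝ, AEStronglyMeasurable u μ → weightedNorm μ γ₁ ρ₁ u ≠ ∞ →
      weightedNorm μ γ₂ ρ₂ u ≠ ∞ →
      weightedNorm μ γ ρ u ^ 2 ≤ C * (weightedNorm μ γ₁ ρ₁ u * weightedNorm μ γ₂ ρ₂ u) := by
  obtain ⟨e, he⟩ : ∃ e, γ + finrank ℝ E * ρ - (γ₁ + finrank ℝ E * ρ₁) = e := ⟨_, rfl⟩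
  have he' : γ + finrank ℝ E * ρ - (γ₂ + finrank ℝ E * ρ₂) = -e := by linarith
  have he₀ : 0 < e := by linarith
  obtain ⟨K, hK⟩ : ∃ K : ℝ≥0, K = ENNReal.LpAddConst (ENNReal.ofReal ρ)⁻¹ :=
    ⟨_, ENNReal.coe_toNNReal (ENNReal.LpAddConst_lt_top _).ne⟩
  obtain ⟨C₁, hC₁⟩ : ∃ C : ℝ≥0,
      C = weightedNorm μ (γ - γ₁) (ρ - ρ₁) ((Metric.ball 0 1).indicator 1) :=
    ⟨_, ENNReal.coe_toNNReal
      (weightedNorm_indicator_ball_ne_top (sub_pos.2 h₁) (by linarith) 1)⟩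
  obtain ⟨C₂, hC₂⟩ : ∃ C : ℝ≥0,
      C = weightedNorm μ (γ - γ₂) (ρ - ρ₂) ((Metric.ball 0 1)ᶜ.indicator 1) :=
    ⟨_, ENNReal.coe_toNNReal
      (weightedNorm_indicator_compl_ball_ne_top (sub_pos.2 h₂) (by linarith) one_pos)⟩
  refine ⟨4 * (K * C₁) * (K * C₂), fun u hu hu₁ hu₂ ↦ ?_⟩
  refine (sq_le_four_mul_mul_of_forall_le (Y := K * C₁ * weightedNorm μ γ₁ ρ₁ u)
    (Z := K * C₂ * weightedNorm μ γ₂ ρ₂ u) (by finiteness) (by finiteness) fun t ht ↦ ?_).trans_eq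
      (by push_cast; ring)
  have ht₀ : (0 : ℝ) < t := by exact_mod_cast pos_iff_ne_zero.2 ht
  have hR : 0 < (t : ℝ) ^ e⁻¹ := Real.rpow_pos_of_pos ht₀ _
  have hle := weightedNorm_le_mul_add_indicator_compl (γ := γ) (γ₁ := γ₁) (γ₂ := γ₂)
    (measurableSet_ball (x := (0 : E)) (ε := 1)) hu hρ₁ h₁.le hρ₂ h₂.le hR
  rw [he, he', Real.rpow_neg hR.le, Real.rpow_inv_rpow ht₀.le he₀.ne', ← hC₁, ← hC₂, ← hK,
    ← NNReal.coe_inv, ENNReal.ofReal_coe_nnreal, ENNReal.ofReal_coe_nnreal] at hle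
  exact hle.trans_eq (by ring)

end MidpointInterpolation

section LargeDefect

variable [InnerProductSpace ℝ E] [FiniteDimensional ℝ E] [Nontrivial E] [MeasurableSpace E]
  [BorelSpace E] (μ : Measure E) [μ.IsAddHaarMeasure] {α β γ σ ω ρ a : ℝ}

lemma convexCombination_pos (ha₀ : 0 < a) (ha₁ : a ≤ 1) (hσ : 0 < σ) (hω : 0 ≤ ω) :
    0 < a * σ + (1 - a) * ω :=
  add_pos_of_pos_of_nonneg (mul_pos ha₀ hσ) (mul_nonneg (sub_nonneg.2 ha₁) hω)

lemma exists_weightedNorm_le_of_convexCombination (ha₀ : 0 < a) (ha₁ : a ≤ 1)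
    (hσ : 0 < σ) (hσ₁ : σ ≤ 1) (hω : 0 ≤ ω) (hω₁ : ω ≤ 1)
    (hd : 0 < a * (α - 1 + finrank ℝ E * σ) + (1 - a) * (β + finrank ℝ E * ω)) :
    ∃ C : ℝ≥0, ∀ u : E → ℝ, ContDiff ℝ 1 u → HasCompactSupport u →
      weightedNorm μ (a * (α - 1) + (1 - a) * β) (a * σ + (1 - a) * ω) u ≤
        C * weightedNorm μ α σ (fun x ↦ ‖fderiv ℝ u x‖) ^ a * weightedNorm μ β ω u ^ (1 - a) :=
  exists_weightedNorm_le_weightedNorm_fderiv μ ha₀ ha₁ hσ hσ₁ hω hω₁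
    (convexCombination_pos ha₀ ha₁ hσ hω) (by linarith) (by ring) (by linarith) (by linarith)

lemma exists_weightedNorm_le_of_lt_defect (ha₀ : 0 < a) (ha₁ : a < 1)
    (hσ : 0 < σ) (hσ₁ : σ ≤ 1) (hω : 0 ≤ ω) (hω₁ : ω ≤ 1)
    (hγ : 0 < γ + finrank ℝ E * ρ)
    (hscale : γ + finrank ℝ E * ρ =
      a * (α - 1 + finrank ℝ E * σ) + (1 - a) * (β + finrank ℝ E * ω))
    (hne : α - 1 + finrank ℝ E * σ ≠ β + finrank ℝ E * ω)
    (hΔ : a < -γ + a * α + (1 - a) * β) :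
    ∃ C : ℝ≥0, ∀ u : E → ℝ, ContDiff ℝ 1 u → HasCompactSupport u →
      weightedNorm μ γ ρ u ≤
        C * weightedNorm μ α σ (fun x ↦ ‖fderiv ℝ u x‖) ^ a * weightedNorm μ β ω u ^ (1 - a) := by
  have hρ : a * σ + (1 - a) * ω < ρ := by
    have hn : (0 : ℝ) < finrank ℝ E := Nat.cast_pos.2 finrank_pos
    have hdefect := div_neg_of_neg_of_pos (sub_neg.2 hΔ) hn
    linarith [eq_sub_div_of_scaling hn hscale]
  have hev : ∀ᶠ b in 𝓝 a, 0 < b ∧ b < 1 ∧ b * σ + (1 - b) * ω < ρ ∧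
      0 < b * (α - 1 + finrank ℝ E * σ) + (1 - b) * (β + finrank ℝ E * ω) :=
    (eventually_gt_nhds ha₀).and <| (eventually_lt_nhds ha₁).and <|
      ((by fun_prop : Continuous fun b : ℝ ↦ b * σ + (1 - b) * ω).continuousAt.eventually_lt
        continuousAt_const hρ).and <|
      continuousAt_const.eventually_lt (by fun_prop) (hscale ▸ hγ)
  obtain ⟨δ, hδ, ⟨hl₀, hl₁, hlρ, hld⟩, hr₀, hr₁, hrρ, hrd⟩ :=
    exists_mul_pos_of_eventually_nhds hev (sub_ne_zero.2 hne)
  obtain ⟨C₁, hC₁⟩ := exists_weightedNorm_le_of_convexCombination μ hl₀ hl₁.le hσ hσ₁ hω hω₁ hld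
  obtain ⟨C₂, hC₂⟩ := exists_weightedNorm_le_of_convexCombination μ hr₀ hr₁.le hσ hσ₁ hω hω₁ hrd
  have hρl := convexCombination_pos hl₀ hl₁.le hσ hω
  have hρr := convexCombination_pos hr₀ hr₁.le hσ hω
  obtain ⟨C, hC⟩ := exists_weightedNorm_sq_le (μ := μ) (γ := γ)
    (γ₁ := (a - δ) * (α - 1) + (1 - (a - δ)) * β) (γ₂ := (a + δ) * (α - 1) + (1 - (a + δ)) * β)
    hρl.le hρr.le hlρ hrρ (by linarith) (by linarith)
  refine ⟨NNReal.sqrt (C * C₁ * C₂), fun u hu huc ↦ ?_⟩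
  exact le_mul_rpow_of_sq_le hl₀.le hl₁.le hr₀.le hr₁.le
    (hC u hu.continuous.aestronglyMeasurable
      (weightedNorm_ne_top hρl (by linarith) hu.continuous huc)
      (weightedNorm_ne_top hρr (by linarith) hu.continuous huc))
    (hC₁ u hu huc) (hC₂ u hu huc)

end LargeDefect

lemma integral_rpow_div_eq_weightedNorm [MeasurableSpace E] [OpensMeasurableSpace E]
    {μ : Measure E} {u : E → ℝ} (hu : AEStronglyMeasurable u μ) (κ s : ℝ) {p : ℝ} (hp : 0 < p) :
    (∫ x, ‖x‖ ^ (κ * p) * |u x| ^ p ∂μ) ^ (s / p) = (weightedNorm μ κ p⁻¹ u).toReal ^ s := by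
  have hpow (x : E) : ‖x‖ ^ (κ * p) * |u x| ^ p = ‖‖x‖ ^ κ * u x‖ ^ p := by
    have hw : 0 ≤ ‖x‖ ^ κ := Real.rpow_nonneg (norm_nonneg x) κ
    rw [norm_mul, Real.norm_of_nonneg hw, Real.norm_eq_abs, Real.mul_rpow hw (abs_nonneg _),
      Real.rpow_mul (norm_nonneg x)]
  have hmeas := aestronglyMeasurable_weight_mul κ hu
  have hexp : (ENNReal.ofReal p⁻¹)⁻¹ = ENNReal.ofReal p := by
    rw [ENNReal.ofReal_inv_of_pos hp, inv_inv]
  rw [weightedNorm, toReal_eLpNorm hmeas, hexp,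
    lpNorm_eq_integral_norm_rpow_toReal (by simpa) ENNReal.ofReal_ne_top hmeas,
    ENNReal.toReal_ofReal hp.le, ← Real.rpow_mul (integral_nonneg fun x ↦ by positivity),
    inv_mul_eq_div]
  simp only [hpow]

section Main

variable [InnerProductSpace ℝ E] [FiniteDimensional ℝ E] [Nontrivial E] [MeasurableSpace E]
  [BorelSpace E] (μ : Measure E) [μ.IsAddHaarMeasure]

lemma exists_weightedNorm_le {α β γ σ ω ρ a : ℝ} (ha₀ : 0 < a) (ha₁ : a ≤ 1)
    (hσ : 0 < σ) (hσ₁ : σ ≤ 1) (hω : 0 ≤ ω) (hω₁ : ω ≤ 1) (hρ : 0 < ρ)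
    (hγ : 0 < γ + finrank ℝ E * ρ)
    (hscale : γ + finrank ℝ E * ρ =
      a * (α - 1 + finrank ℝ E * σ) + (1 - a) * (β + finrank ℝ E * ω))
    (hΔ₀ : 0 ≤ -γ + a * α + (1 - a) * β)
    (hΔ₁ : γ + finrank ℝ E * ρ = α - 1 + finrank ℝ E * σ → -γ + a * α + (1 - a) * β ≤ a) :
    ∃ C : ℝ≥0, ∀ u : E → ℝ, ContDiff ℝ 1 u → HasCompactSupport u →
      weightedNorm μ γ ρ u ≤
        C * weightedNorm μ α σ (fun x ↦ ‖fderiv ℝ u x‖) ^ a * weightedNorm μ β ω u ^ (1 - a) := by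
  rcases le_or_gt (-γ + a * α + (1 - a) * β) a with hΔ | hΔ
  · exact exists_weightedNorm_le_weightedNorm_fderiv μ ha₀ ha₁ hσ hσ₁ hω hω₁ hρ hγ hscale hΔ₀ hΔ
  · have hne := mt hΔ₁ hΔ.not_ge
    refine exists_weightedNorm_le_of_lt_defect μ ha₀ (ha₁.lt_of_ne fun ha ↦ hne ?_) hσ hσ₁ hω hω₁
      hγ hscale (fun heq ↦ hne ?_) hΔ
    · simpa [ha] using hscale
    · rw [hscale, ← heq]
      ring

lemma exists_toReal_weightedNorm_le {α β γ σ ω ρ a : ℝ} (ha₀ : 0 < a) (ha₁ : a ≤ 1)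
    (hσ : 0 < σ) (hσ₁ : σ ≤ 1) (hω : 0 < ω) (hω₁ : ω ≤ 1) (hρ : 0 < ρ)
    (hγ : 0 < γ + finrank ℝ E * ρ) (hα : 0 < α + finrank ℝ E * σ)
    (hβ : 0 < β + finrank ℝ E * ω)
    (hscale : γ + finrank ℝ E * ρ =
      a * (α - 1 + finrank ℝ E * σ) + (1 - a) * (β + finrank ℝ E * ω))
    (hΔ₀ : 0 ≤ -γ + a * α + (1 - a) * β)
    (hΔ₁ : γ + finrank ℝ E * ρ = α - 1 + finrank ℝ E * σ → -γ + a * α + (1 - a) * β ≤ a) :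
    ∃ c : ℝ, 0 < c ∧ ∀ u : E → ℝ, ContDiff ℝ 1 u → HasCompactSupport u →
      (weightedNorm μ γ ρ u).toReal ≤
        c * (weightedNorm μ α σ (fun x ↦ ‖fderiv ℝ u x‖)).toReal ^ a *
          (weightedNorm μ β ω u).toReal ^ (1 - a) := by
  obtain ⟨C, hC⟩ :=
    exists_weightedNorm_le μ ha₀ ha₁ hσ hσ₁ hω.le hω₁ hρ hγ hscale hΔ₀ hΔ₁
  refine ⟨C + 1, by positivity, fun u hu huc ↦ ?_⟩
  have hgrad : weightedNorm μ α σ (fun x ↦ ‖fderiv ℝ u x‖) ≠ ∞ :=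
    weightedNorm_ne_top hσ hα (hu.continuous_fderiv one_ne_zero).norm (huc.fderiv ℝ).norm
  have hfun : weightedNorm μ β ω u ≠ ∞ := weightedNorm_ne_top hω hβ hu.continuous huc
  have hreal := ENNReal.toReal_mono (ENNReal.mul_ne_top
    (ENNReal.mul_ne_top ENNReal.coe_ne_top (ENNReal.rpow_ne_top_of_nonneg ha₀.le hgrad))
    (ENNReal.rpow_ne_top_of_nonneg (sub_nonneg.2 ha₁) hfun)) (hC u hu huc)
  rw [ENNReal.toReal_mul, ENNReal.toReal_mul, ← ENNReal.toReal_rpow, ← ENNReal.toReal_rpow,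
    ENNReal.coe_toReal] at hreal
  refine hreal.trans ?_
  gcongr
  linarith

end Main

end CaffarelliKohnNirenberg

open CaffarelliKohnNirenberg Module in
theorem stmt_4_general {E : Type*} [NormedAddCommGroup E] [InnerProductSpace ℝ E]
    [FiniteDimensional ℝ E] [Nontrivial E] [MeasurableSpace E] [BorelSpace E] (μ : Measure E)
    [μ.IsAddHaarMeasure] {p q r α β γ a : ℝ} (hp : 1 ≤ p) (hq : 1 ≤ q) (hr : 0 < r) (ha0 : 0 < a)
    (ha1 : a ≤ 1) (hγ : -γ < finrank ℝ E / r) (hα : -α < finrank ℝ E / p)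
    (hβ : -β < finrank ℝ E / q)
    (hbal : γ + finrank ℝ E / r =
      a * (α - 1 + finrank ℝ E / p) + (1 - a) * (β + finrank ℝ E / q))
    (hΔ0 : 0 ≤ -γ + a * α + (1 - a) * β)
    (hΔa : 1 / r + γ / finrank ℝ E = 1 / p + (α - 1) / finrank ℝ E →
      -γ + a * α + (1 - a) * β ≤ a) :
    ∃ c : ℝ, 0 < c ∧ ∀ f : E → ℝ, ContDiff ℝ 1 f → HasCompactSupport f →
      (∫ x, ‖x‖ ^ (γ * r) * |f x| ^ r ∂μ) ^ (1 / r) ≤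
        c * (∫ x, ‖x‖ ^ (α * p) * ‖fderiv ℝ f x‖ ^ p ∂μ) ^ (a / p) *
          (∫ x, ‖x‖ ^ (β * q) * |f x| ^ q ∂μ) ^ ((1 - a) / q) := by
  have hp₀ : 0 < p := one_pos.trans_le hp
  have hq₀ : 0 < q := one_pos.trans_le hq
  have hn : (finrank ℝ E : ℝ) ≠ 0 := Nat.cast_ne_zero.2 finrank_pos.ne'
  obtain ⟨c, hc, hineq⟩ := exists_toReal_weightedNorm_le μ (α := α) (β := β) (γ := γ)
    ha0 ha1 (inv_pos.2 hp₀) (inv_le_one_of_one_le₀ hp) (inv_pos.2 hq₀) (inv_le_one_of_one_le₀ hq)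
    (inv_pos.2 hr) (by rw [← div_eq_mul_inv]; linarith) (by rw [← div_eq_mul_inv]; linarith)
    (by rw [← div_eq_mul_inv]; linarith) (by simpa only [← div_eq_mul_inv]) hΔ0
    fun hcrit ↦ hΔa (by field_simp at hcrit ⊢; linarith)
  refine ⟨c, hc, fun f hf hfc ↦ ?_⟩
  have hgrad := integral_rpow_div_eq_weightedNorm (μ := μ)
    (hf.continuous_fderiv one_ne_zero).norm.aestronglyMeasurable α a hp₀
  simp only [abs_norm] at hgrad
  rw [hgrad, integral_rpow_div_eq_weightedNorm hf.continuous.aestronglyMeasurable _ _ hr,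
    integral_rpow_div_eq_weightedNorm hf.continuous.aestronglyMeasurable _ _ hq₀, Real.rpow_one]
  exact hineq f hf hfc

/-- Caffarelli–Kohn–Nirenberg inequalities on ℝⁿ (sufficiency direction, in the
formulation of D'Ancona–Luca'). -/
theorem stmt_4 (n : ℕ) (hn : 1 ≤ n) (p q r α β γ a : ℝ)
    (hp : 1 ≤ p) (hq : 1 ≤ q) (hr : 0 < r) (ha0 : 0 < a) (ha1 : a ≤ 1)
    (hγ : -γ < (n : ℝ) / r) (hα : -α < (n : ℝ) / p) (hβ : -β < (n : ℝ) / q)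
    (hbal : γ + (n : ℝ) / r =
      a * (α - 1 + (n : ℝ) / p) + (1 - a) * (β + (n : ℝ) / q))
    (hΔ0 : 0 ≤ -γ + a * α + (1 - a) * β)
    (hΔa : 1 / r + γ / (n : ℝ) = 1 / p + (α - 1) / (n : ℝ) →
      -γ + a * α + (1 - a) * β ≤ a) :
    ∃ c : ℝ, 0 < c ∧ ∀ f : EuclideanSpace ℝ (Fin n) → ℝ,
      ContDiff ℝ (⊤ : ℕ∞) f → HasCompactSupport f →
      (∫ x, ‖x‖ ^ (γ * r) * |f x| ^ r) ^ (1 / r) ≤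
        c * (∫ x, ‖x‖ ^ (α * p) * ‖gradient f x‖ ^ p) ^ (a / p) *
          (∫ x, ‖x‖ ^ (β * q) * |f x| ^ q) ^ ((1 - a) / q) := by
  have : NeZero n := ⟨by lia⟩
  obtain ⟨c, hc, hineq⟩ := stmt_4_general (E := EuclideanSpace ℝ (Fin n)) volume hp hq hr ha0 ha1
    (by simpa) (by simpa) (by simpa) (by simpa) hΔ0 (by simpa using hΔa)
  refine ⟨c, hc, fun f hf hfc ↦ ?_⟩
  simpa only [gradient, LinearIsometryEquiv.norm_map] using
    hineq f (hf.of_le (by exact_mod_cast le_top)) hfc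
end

section
/- Let n ≥ 1, let p ≥ 1, q ≥ 1, r > 0, let α, β, γ be real and 0 < a ≤ 1, and assume -γ < n/r, -α < n/p, -β < n/q, and γ + n/r = a(α - 1 + n/p) + (1-a)(β + n/q). Set Δ = -γ + aα + (1-a)β. If there exists a constant c > 0 such that for all smooth compactly supported f : ℝⁿ → ℝ one has (∫_{ℝⁿ} |x|^{γr} |f(x)|^{r} dx)^{1/r} ≤ c (∫_{ℝⁿ} |x|^{αp} |∇f(x)|^{p} dx)^{a/p} (∫_{ℝⁿ} |x|^{βq} |f(x)|^{q} dx)^{(1-a)/q}, then Δ ≥ 0, and moreover Δ ≤ a in the case 1/r + γ/n = 1/p + (α-1)/n. -/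
open MeasureTheory

/-!
Both conclusions come from testing the inequality on smooth functions supported away from the
origin. Moving a fixed bump to distance `R` from the origin multiplies its norm with weight
`|x| ^ s` by about `R ^ s`, so letting `R → ∞` gives `γ ≤ a α + (1 - a) β`, that is `0 ≤ Δ`.
If `1/r + γ/n = 1/p + (α-1)/n`, then all the norms in the inequality (apart from factors with
exponent zero) are invariant under the same dilation `f ↦ c ^ A f(c x)`. A sum of `N` such dilates
with disjoint supports multiplies them by `N ^ (1/r)`, `N ^ (1/p)` and `N ^ (1/q)`, so letting
`N → ∞` gives `1/r ≤ a/p + (1-a)/q`, which by the balance condition is `Δ ≤ a`.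
-/

open Filter Function Set Module
open scoped ContDiff Topology

section Elementary

lemma apply_sum_eq_sum_apply_of_support_subsingleton {ι M N : Type*} [AddCommMonoid M]
    [AddCommMonoid N] {g : M → N} (hg : g 0 = 0) {v : ι → M} (hv : (support v).Subsingleton)
    (S : Finset ι) :
    g (∑ i ∈ S, v i) = ∑ i ∈ S, g (v i) := by
  by_cases hne : ∃ i ∈ S, v i ≠ 0
  · obtain ⟨i, hi, hvi⟩ := hne
    have hzero : ∀ j, j ≠ i → v j = 0 := fun j hji ↦ of_not_not fun hvj ↦ hji (hv hvj hvi)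
    rw [Finset.sum_eq_single_of_mem i hi fun j _ ↦ hzero j,
      Finset.sum_eq_single_of_mem i hi fun j _ hji ↦ by rw [hzero j hji, hg]]
  · push Not at hne
    rw [Finset.sum_eq_zero hne, hg, Finset.sum_eq_zero fun i hi ↦ by rw [hne i hi, hg]]

lemma rpow_le_rpow_abs_mul_rpow {C R m : ℝ} (hC : 0 < C) (hR : 0 < R)
    (hm : m ∈ Icc (R / C) (C * R)) (s : ℝ) : m ^ s ≤ C ^ |s| * R ^ s := by
  have hm_pos : 0 < m := (div_pos hR hC).trans_le hm.1
  rcases le_total 0 s with hs | hs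
  · rw [abs_of_nonneg hs, ← Real.mul_rpow hC.le hR.le]
    exact Real.rpow_le_rpow hm_pos.le hm.2 hs
  · rw [abs_of_nonpos hs, Real.rpow_neg hC.le, mul_comm, ← div_eq_mul_inv,
      ← Real.div_rpow hR.le hC.le]
    exact Real.rpow_le_rpow_of_nonpos (div_pos hR hC) hm.1 hs

lemma le_of_eventually_mul_natCast_rpow_le {K L x y : ℝ} (hK : 0 < K)
    (h : ∀ᶠ N : ℕ in atTop, K * (N : ℝ) ^ x ≤ L * (N : ℝ) ^ y) : x ≤ y := by
  by_contra! hyx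
  have hgrow : Tendsto (fun N : ℕ ↦ (N : ℝ) ^ (x - y)) atTop atTop :=
    (tendsto_rpow_atTop (sub_pos.2 hyx)).comp tendsto_natCast_atTop_atTop
  obtain ⟨N, hN, hle, hN_pos⟩ :=
    ((hgrow.eventually_gt_atTop (L / K)).and (h.and (eventually_gt_atTop 0))).exists
  have hN_pos : (0 : ℝ) < N := Nat.cast_pos.2 hN_pos
  rw [Real.rpow_sub hN_pos, div_lt_div_iff₀ hK (by positivity)] at hN
  linarith

lemma rpow_mul_rpow_eq {R y : ℝ} (hR : 0 ≤ R) (hy : 0 ≤ y) (x b : ℝ) :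
    (R ^ x * y) ^ b = R ^ (x * b) * y ^ b := by
  rw [Real.mul_rpow (Real.rpow_nonneg hR x) hy, ← Real.rpow_mul hR]

end Elementary

lemma zero_notMem_of_subset_norm_preimage {E : Type*} [SeminormedAddGroup E] {S : Set E}
    {I : Set ℝ} (hS : S ⊆ norm ⁻¹' I) (hI : 0 ∉ I) : 0 ∉ S := fun h ↦
  hI (by simpa only [mem_preimage, norm_zero] using hS h)

section WeightedIntegrand

variable {E F : Type*} [NormedAddCommGroup E] [NormedAddCommGroup F] {f : E → F} {s t : ℝ}

lemma continuous_norm_rpow_mul_norm_rpow (hf : Continuous f) (h0 : 0 ∉ tsupport f) (ht : 0 < t) :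
    Continuous fun x ↦ ‖x‖ ^ s * ‖f x‖ ^ t := by
  have hsupp : (tsupport fun x ↦ ‖x‖ ^ s * ‖f x‖ ^ t) ⊆ tsupport f :=
    tsupport_mul_subset_right.trans
      (tsupport_comp_subset (g := fun y : F ↦ ‖y‖ ^ t) (by simp [ht.ne']) f)
  refine continuous_of_tsupport fun x hx ↦ ?_
  have hx0 : x ≠ 0 := fun h ↦ h0 (h ▸ hsupp hx)
  exact (continuous_norm.continuousAt.rpow_const (Or.inl (norm_ne_zero_iff.2 hx0))).mul
    (hf.norm.continuousAt.rpow_const (Or.inr ht.le))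

lemma hasCompactSupport_norm_rpow_mul_norm_rpow (hc : HasCompactSupport f) (ht : 0 < t) :
    HasCompactSupport fun x ↦ ‖x‖ ^ s * ‖f x‖ ^ t :=
  (hc.comp_left (g := fun y ↦ ‖y‖ ^ t) (by simp [ht.ne'])).mul_left

end WeightedIntegrand

section WeightedLpNorm

variable {E F : Type*} [NormedAddCommGroup E] [MeasurableSpace E] [NormedAddCommGroup F]
  {μ : Measure E} {f : E → F} {s t : ℝ}

/-- The power-weighted Lebesgue norm `‖|x| ^ s f‖` in `L ^ t`, as a real number. It is meaningful
for `0 < t` when `|x| ^ s f` lies in `L ^ t`, and takes the junk value `0` when the integral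
diverges. -/
noncomputable def weightedLpNorm (μ : Measure E) (s t : ℝ) (f : E → F) : ℝ :=
  (∫ x, ‖x‖ ^ (s * t) * ‖f x‖ ^ t ∂μ) ^ (1 / t)

lemma integral_norm_rpow_mul_norm_rpow_nonneg : 0 ≤ ∫ x, ‖x‖ ^ s * ‖f x‖ ^ t ∂μ :=
  integral_nonneg fun x ↦ by positivity

lemma weightedLpNorm_nonneg : 0 ≤ weightedLpNorm μ s t f :=
  Real.rpow_nonneg integral_norm_rpow_mul_norm_rpow_nonneg _

lemma weightedLpNorm_rpow (b : ℝ) :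
    weightedLpNorm μ s t f ^ b = (∫ x, ‖x‖ ^ (s * t) * ‖f x‖ ^ t ∂μ) ^ (b / t) := by
  rw [weightedLpNorm, ← Real.rpow_mul integral_norm_rpow_mul_norm_rpow_nonneg,
    one_div_mul_eq_div]

variable [BorelSpace E] [IsFiniteMeasureOnCompacts μ]

lemma integrable_norm_rpow_mul_norm_rpow (hf : Continuous f) (hc : HasCompactSupport f)
    (h0 : 0 ∉ tsupport f) (ht : 0 < t) : Integrable (fun x ↦ ‖x‖ ^ s * ‖f x‖ ^ t) μ :=
  (continuous_norm_rpow_mul_norm_rpow hf h0 ht).integrable_of_hasCompactSupport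
    (hasCompactSupport_norm_rpow_mul_norm_rpow hc ht)

lemma weightedLpNorm_pos [μ.IsOpenPosMeasure] (hf : Continuous f) (hc : HasCompactSupport f)
    (h0 : 0 ∉ tsupport f) (hne : f ≠ 0) (ht : 0 < t) : 0 < weightedLpNorm μ s t f := by
  obtain ⟨x, hx⟩ := Function.ne_iff.1 hne
  have hx0 : x ≠ 0 := fun h ↦ h0 (h ▸ subset_tsupport f hx)
  refine Real.rpow_pos_of_pos ?_ _
  have hcont := continuous_norm_rpow_mul_norm_rpow (s := s * t) hf h0 ht
  refine hcont.integral_pos_of_hasCompactSupport_nonneg_nonzero (x := x)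
    (hasCompactSupport_norm_rpow_mul_norm_rpow hc ht) (fun y ↦ ?_) ?_
  · simp only [Pi.zero_apply]
    positivity
  · rw [Pi.zero_apply] at hx
    positivity

lemma weightedLpNorm_le_mul_of_norm_rpow_le {s' K : ℝ} (hf : Continuous f)
    (hc : HasCompactSupport f) (h0 : 0 ∉ tsupport f) (ht : 0 < t) (hK : 0 ≤ K)
    (hle : ∀ x ∈ support f, ‖x‖ ^ s ≤ K * ‖x‖ ^ s') :
    weightedLpNorm μ s t f ≤ K * weightedLpNorm μ s' t f := by
  have hpointwise (x : E) :
      ‖x‖ ^ (s * t) * ‖f x‖ ^ t ≤ K ^ t * (‖x‖ ^ (s' * t) * ‖f x‖ ^ t) := by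
    by_cases hx : f x = 0
    · simp [hx, ht.ne']
    · rw [← mul_assoc, Real.rpow_mul (norm_nonneg x), Real.rpow_mul (norm_nonneg x),
        ← Real.mul_rpow hK (by positivity)]
      gcongr
      exact hle x hx
  calc weightedLpNorm μ s t f
      ≤ (K ^ t * ∫ x, ‖x‖ ^ (s' * t) * ‖f x‖ ^ t ∂μ) ^ (1 / t) := by
        refine Real.rpow_le_rpow integral_norm_rpow_mul_norm_rpow_nonneg ?_ (by positivity)
        rw [← integral_const_mul]
        exact integral_mono (integrable_norm_rpow_mul_norm_rpow hf hc h0 ht)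
          ((integrable_norm_rpow_mul_norm_rpow hf hc h0 ht).const_mul _) hpointwise
    _ = K * weightedLpNorm μ s' t f := by
        rw [Real.mul_rpow (by positivity) integral_norm_rpow_mul_norm_rpow_nonneg, one_div,
          Real.rpow_rpow_inv hK ht.ne', ← one_div, weightedLpNorm]

lemma weightedLpNorm_le_rpow_mul_weightedLpNorm {C R : ℝ} (hf : Continuous f)
    (hc : HasCompactSupport f) (ht : 0 < t) (hC : 0 < C) (hR : 0 < R)
    (hsupp : tsupport f ⊆ norm ⁻¹' Icc (R / C) (C * R)) (s s' : ℝ) :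
    weightedLpNorm μ s t f ≤ C ^ |s - s'| * R ^ (s - s') * weightedLpNorm μ s' t f := by
  have hpos : ∀ x ∈ tsupport f, 0 < ‖x‖ := fun x hx ↦ (div_pos hR hC).trans_le (hsupp hx).1
  refine weightedLpNorm_le_mul_of_norm_rpow_le hf hc
    (fun h0 ↦ (hpos 0 h0).ne' norm_zero) ht (by positivity) fun x hx ↦ ?_
  have hx : x ∈ tsupport f := subset_tsupport f hx
  calc ‖x‖ ^ s = ‖x‖ ^ (s - s') * ‖x‖ ^ s' := by
        rw [← Real.rpow_add (hpos x hx), sub_add_cancel]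
    _ ≤ C ^ |s - s'| * R ^ (s - s') * ‖x‖ ^ s' := by
        gcongr
        exact rpow_le_rpow_abs_mul_rpow hC hR (hsupp hx) _

end WeightedLpNorm

section Translation

variable {E F : Type*} [NormedAddCommGroup E] [NormedAddCommGroup F] {f : E → F} {v : E}

lemma tsupport_comp_sub_right_subset_norm_preimage (hf : tsupport f ⊆ Metric.ball 0 1)
    (hv : 2 ≤ ‖v‖) :
    (tsupport fun x ↦ f (x - v)) ⊆ norm ⁻¹' Icc (‖v‖ / 2) (2 * ‖v‖) := by
  intro x hx
  have hxv : ‖x - v‖ < 1 := mem_ball_zero_iff.1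
    (hf (tsupport_comp_subset_preimage f (f := (· - v)) (by fun_prop) hx))
  have hlower := norm_sub_norm_le v x
  have hupper := norm_sub_norm_le x v
  rw [norm_sub_rev] at hlower
  constructor <;> linarith

variable [MeasurableSpace E] [BorelSpace E] {μ : Measure E} [μ.IsAddRightInvariant]

lemma weightedLpNorm_zero_comp_sub_right (t : ℝ) (f : E → F) (v : E) :
    weightedLpNorm μ 0 t (fun x ↦ f (x - v)) = weightedLpNorm μ 0 t f := by
  simp only [weightedLpNorm, zero_mul, Real.rpow_zero, one_mul]
  rw [integral_sub_right_eq_self fun x ↦ ‖f x‖ ^ t]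

variable [IsFiniteMeasureOnCompacts μ] {t : ℝ}

lemma weightedLpNorm_comp_sub_right_le (hf : Continuous f) (hc : HasCompactSupport f)
    (hsupp : tsupport f ⊆ Metric.ball 0 1) (ht : 0 < t) (hv : 2 ≤ ‖v‖) (s : ℝ) :
    weightedLpNorm μ s t (fun x ↦ f (x - v)) ≤ ‖v‖ ^ s * (2 ^ |s| * weightedLpNorm μ 0 t f) := by
  rw [← mul_assoc, mul_comm (‖v‖ ^ s)]
  simpa only [sub_zero, weightedLpNorm_zero_comp_sub_right] using
    weightedLpNorm_le_rpow_mul_weightedLpNorm (μ := μ) (f := fun x ↦ f (x - v)) (by fun_prop)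
      (hc.comp_homeomorph (Homeomorph.subRight v)) ht two_pos (by linarith)
      (tsupport_comp_sub_right_subset_norm_preimage hsupp hv) s 0

lemma rpow_mul_weightedLpNorm_le_comp_sub_right (hf : Continuous f) (hc : HasCompactSupport f)
    (hsupp : tsupport f ⊆ Metric.ball 0 1) (ht : 0 < t) (hv : 2 ≤ ‖v‖) (s : ℝ) :
    ‖v‖ ^ s * weightedLpNorm μ 0 t f ≤ 2 ^ |s| * weightedLpNorm μ s t (fun x ↦ f (x - v)) := by
  have hv_pos : 0 < ‖v‖ := by linarith
  have hle : weightedLpNorm μ 0 t f ≤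
      2 ^ |s| * ‖v‖ ^ (-s) * weightedLpNorm μ s t (fun x ↦ f (x - v)) := by
    simpa only [zero_sub, abs_neg, weightedLpNorm_zero_comp_sub_right] using
      weightedLpNorm_le_rpow_mul_weightedLpNorm (μ := μ) (f := fun x ↦ f (x - v)) (by fun_prop)
        (hc.comp_homeomorph (Homeomorph.subRight v)) ht two_pos hv_pos
        (tsupport_comp_sub_right_subset_norm_preimage hsupp hv) 0 s
  rwa [Real.rpow_neg hv_pos.le, mul_right_comm, ← div_eq_mul_inv,
    le_div_iff₀' (by positivity)] at hle

end Translation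

section LacunarySum

lemma support_dilates_subsingleton {E F : Type*} [NormedAddCommGroup E] [NormedSpace ℝ E]
    [Zero F] {f : E → F} {ρ : ℝ} (hρ : 1 < ρ) (hsupp : support f ⊆ norm ⁻¹' Ico 1 ρ)
    (x : E) : (support fun k : ℕ ↦ f (ρ ^ k • x)).Subsingleton := by
  have hρ_pos : 0 < ρ := one_pos.trans hρ
  have hle {i j : ℕ} (hi : f (ρ ^ i • x) ≠ 0) (hj : f (ρ ^ j • x) ≠ 0) : i ≤ j := by
    by_contra! hji
    have hupper : ρ ^ i * ‖x‖ < ρ := by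
      simpa [norm_smul, abs_of_pos hρ_pos] using (hsupp hi).2
    have hlower : 1 ≤ ρ ^ j * ‖x‖ := by
      simpa [norm_smul, abs_of_pos hρ_pos] using (hsupp hj).1
    refine hupper.not_ge ?_
    calc ρ ≤ ρ * (ρ ^ j * ‖x‖) := le_mul_of_one_le_right hρ_pos.le hlower
      _ = ρ ^ (j + 1) * ‖x‖ := by ring
      _ ≤ ρ ^ i * ‖x‖ := by gcongr; exacts [hρ.le, hji]
  exact fun i hi j hj ↦ (hle hi hj).antisymm (hle hj hi)

variable {E F : Type*} [NormedAddCommGroup E] [NormedSpace ℝ E] [NormedAddCommGroup F]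
  [NormedSpace ℝ F] {f : E → F} {ρ A : ℝ} {N : ℕ}

/-- The sum of the dilates `c ^ A f(c x)` of `f` over `c = ρ ^ k`, `k < N`. -/
noncomputable def lacunarySum (ρ A : ℝ) (N : ℕ) (f : E → F) (x : E) : F :=
  ∑ k ∈ Finset.range N, (ρ ^ k) ^ A • f (ρ ^ k • x)

lemma contDiff_lacunarySum {m : WithTop ℕ∞} (hf : ContDiff ℝ m f) :
    ContDiff ℝ m (lacunarySum ρ A N f) :=
  ContDiff.sum fun _ _ ↦ (hf.comp (contDiff_const_smul _)).const_smul _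

lemma fderiv_lacunarySum (hρ : 0 < ρ) (hf : Differentiable ℝ f) :
    fderiv ℝ (lacunarySum ρ A N f) = lacunarySum ρ (A + 1) N (fderiv ℝ f) := by
  ext1 x
  have hdilate (k : ℕ) : DifferentiableAt ℝ (fun x ↦ f (ρ ^ k • x)) x := by fun_prop
  unfold lacunarySum
  rw [fderiv_fun_sum fun k _ ↦ (hdilate k).fun_const_smul _]
  refine Finset.sum_congr rfl fun k _ ↦ ?_
  rw [fderiv_fun_const_smul (hdilate k), fderiv_comp_smul, smul_smul,
    Real.rpow_add_one (by positivity)]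

lemma tsupport_lacunarySum_subset :
    tsupport (lacunarySum ρ A N f) ⊆ ⋃ k ∈ Finset.range N, (ρ ^ k • ·) ⁻¹' tsupport f := by
  refine closure_minimal (fun x hx ↦ ?_) <| isClosed_biUnion_finset fun k _ ↦
    (isClosed_tsupport f).preimage (continuous_const_smul _)
  obtain ⟨k, hk, hne⟩ := Finset.exists_ne_zero_of_sum_ne_zero hx
  exact mem_biUnion hk (subset_tsupport f (right_ne_zero_of_smul hne))

lemma zero_notMem_tsupport_lacunarySum (h0 : 0 ∉ tsupport f) :
    0 ∉ tsupport (lacunarySum ρ A N f) := fun h ↦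
  h0 (by simpa using (mem_iUnion₂.1 (tsupport_lacunarySum_subset h)).choose_spec.2)

lemma hasCompactSupport_lacunarySum (hρ : ρ ≠ 0) (hc : HasCompactSupport f) :
    HasCompactSupport (lacunarySum ρ A N f) := by
  have hsum : lacunarySum ρ A N f =
      ∑ k ∈ Finset.range N, fun x ↦ (ρ ^ k) ^ A • f (ρ ^ k • x) := by
    ext x
    simp only [lacunarySum, Finset.sum_apply]
  rw [hsum]
  exact .finset_sum fun k _ ↦ (hc.comp_smul (pow_ne_zero k hρ)).smul_left

lemma norm_rpow_mul_norm_dilate_rpow {s t c : ℝ} (hc : 0 < c) (ht : 0 < t) (f : E → F) (x : E) :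
    ‖x‖ ^ (s * t) * ‖c ^ (s + finrank ℝ E / t) • f (c • x)‖ ^ t =
      c ^ finrank ℝ E * (‖c • x‖ ^ (s * t) * ‖f (c • x)‖ ^ t) := by
  have hexp : (s + finrank ℝ E / t) * t = s * t + finrank ℝ E := by field_simp
  rw [norm_smul, norm_smul, Real.norm_of_nonneg (by positivity), Real.norm_of_nonneg hc.le,
    Real.mul_rpow (by positivity) (by positivity), Real.mul_rpow hc.le (by positivity),
    ← Real.rpow_mul hc.le, hexp, Real.rpow_add hc, Real.rpow_natCast]
  ring

lemma norm_rpow_mul_norm_lacunarySum_rpow {s t : ℝ} (hρ : 1 < ρ) (ht : 0 < t)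
    (hsupp : support f ⊆ norm ⁻¹' Ico 1 ρ) (x : E) :
    ‖x‖ ^ (s * t) * ‖lacunarySum ρ (s + finrank ℝ E / t) N f x‖ ^ t =
      ∑ k ∈ Finset.range N,
        (ρ ^ k) ^ finrank ℝ E * (‖ρ ^ k • x‖ ^ (s * t) * ‖f (ρ ^ k • x)‖ ^ t) := by
  have hsub : (support fun k : ℕ ↦
      (ρ ^ k) ^ (s + finrank ℝ E / t) • f (ρ ^ k • x)).Subsingleton :=
    (support_dilates_subsingleton hρ hsupp x).anti fun _ ↦ right_ne_zero_of_smul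
  rw [lacunarySum,
    apply_sum_eq_sum_apply_of_support_subsingleton (g := fun y : F ↦ ‖y‖ ^ t)
      (by simp [ht.ne']) hsub,
    Finset.mul_sum]
  exact Finset.sum_congr rfl fun k _ ↦ norm_rpow_mul_norm_dilate_rpow (by positivity) ht f x

variable [MeasurableSpace E] [BorelSpace E] [FiniteDimensional ℝ E] {μ : Measure E}
  [μ.IsAddHaarMeasure]

lemma integral_pow_finrank_mul_comp_smul {c : ℝ} (hc : 0 < c) (g : E → ℝ) :
    ∫ x, c ^ finrank ℝ E * g (c • x) ∂μ = ∫ x, g x ∂μ := by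
  rw [integral_const_mul, Measure.integral_comp_smul_of_nonneg μ g c (hR := hc.le), smul_eq_mul,
    mul_inv_cancel_left₀ (by positivity)]

lemma weightedLpNorm_lacunarySum {s t : ℝ} (hρ : 1 < ρ) (ht : 0 < t) (hf : Continuous f)
    (hc : HasCompactSupport f) (hsupp : tsupport f ⊆ norm ⁻¹' Ico 1 ρ) :
    weightedLpNorm μ s t (lacunarySum ρ (s + finrank ℝ E / t) N f) =
      (N : ℝ) ^ (1 / t) * weightedLpNorm μ s t f := by
  have hdilate_pos (k : ℕ) : 0 < ρ ^ k := pow_pos (one_pos.trans hρ) k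
  have h0 : 0 ∉ tsupport f := zero_notMem_of_subset_norm_preimage hsupp (by simp)
  have hint := integrable_norm_rpow_mul_norm_rpow (μ := μ) (s := s * t) hf hc h0 ht
  rw [weightedLpNorm, weightedLpNorm,
    ← Real.mul_rpow N.cast_nonneg integral_norm_rpow_mul_norm_rpow_nonneg]
  congr 1
  simp_rw [norm_rpow_mul_norm_lacunarySum_rpow hρ ht ((subset_tsupport f).trans hsupp)]
  rw [integral_finsetSum _ fun k _ ↦ (hint.comp_smul (hdilate_pos k).ne').const_mul _]
  simp_rw [integral_pow_finrank_mul_comp_smul (hdilate_pos _)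
    fun x ↦ ‖x‖ ^ (s * t) * ‖f x‖ ^ t]
  rw [Finset.sum_const, Finset.card_range, nsmul_eq_mul]

end LacunarySum

lemma exists_contDiff_ne_zero_tsupport_subset_norm_preimage {E : Type*} [NormedAddCommGroup E]
    [NormedSpace ℝ E] [FiniteDimensional ℝ E] [Nontrivial E] {l u : ℝ} (hl : 0 ≤ l) (hlu : l < u) :
    ∃ φ : E → ℝ, ContDiff ℝ ∞ φ ∧ HasCompactSupport φ ∧ φ ≠ 0 ∧
      tsupport φ ⊆ norm ⁻¹' Ioo l u := by
  obtain ⟨b, hlb, hbu⟩ := exists_between hlu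
  obtain ⟨v, hv⟩ := exists_norm_eq E (hl.trans hlb.le)
  have hnhds : norm ⁻¹' Ioo l u ∈ 𝓝 v :=
    continuous_norm.continuousAt.preimage_mem_nhds (Ioo_mem_nhds (hv ▸ hlb) (hv ▸ hbu))
  obtain ⟨φ, hsupp, hc, hφ, -, hφv⟩ := exists_contDiff_tsupport_subset (n := ⊤) hnhds
  exact ⟨φ, hφ, hc, fun h ↦ by simp [h] at hφv, hsupp⟩

/-- The Caffarelli–Kohn–Nirenberg inequality with some constant, required only for smooth compactly
supported functions that vanish near the origin, where every weighted norm is finite. -/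
def CKNInequality {E : Type*} [NormedAddCommGroup E] [NormedSpace ℝ E] [MeasurableSpace E]
    (μ : Measure E) (p q r α β γ a : ℝ) : Prop :=
  ∃ c : ℝ, 0 < c ∧ ∀ f : E → ℝ, ContDiff ℝ ∞ f → HasCompactSupport f → 0 ∉ tsupport f →
    weightedLpNorm μ γ r f ≤
      c * weightedLpNorm μ α p (fderiv ℝ f) ^ a * weightedLpNorm μ β q f ^ (1 - a)

namespace CKNInequality

lemma of_integral_gradient {E : Type*} [NormedAddCommGroup E] [InnerProductSpace ℝ E]
    [CompleteSpace E] [MeasurableSpace E] {μ : Measure E} {p q r α β γ a : ℝ}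
    (h : ∃ c : ℝ, 0 < c ∧ ∀ f : E → ℝ, ContDiff ℝ ∞ f → HasCompactSupport f →
      (∫ x, ‖x‖ ^ (γ * r) * |f x| ^ r ∂μ) ^ (1 / r) ≤
        c * (∫ x, ‖x‖ ^ (α * p) * ‖gradient f x‖ ^ p ∂μ) ^ (a / p) *
          (∫ x, ‖x‖ ^ (β * q) * |f x| ^ q ∂μ) ^ ((1 - a) / q)) :
    CKNInequality μ p q r α β γ a := by
  obtain ⟨c, hc, h⟩ := h
  refine ⟨c, hc, fun f hf hfc _ ↦ ?_⟩
  rw [weightedLpNorm_rpow, weightedLpNorm_rpow]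
  simpa only [weightedLpNorm, gradient, LinearIsometryEquiv.norm_map,
    Real.norm_eq_abs] using h f hf hfc

variable {E : Type*} [NormedAddCommGroup E] [NormedSpace ℝ E] [MeasurableSpace E] [BorelSpace E]
  {μ : Measure E} [μ.IsAddHaarMeasure] {p q r α β γ a : ℝ}

lemma exists_weightedLpNorm_mul_rpow_le (h : CKNInequality μ p q r α β γ a) (hp : 0 < p)
    (hq : 0 < q) (hr : 0 < r) (ha0 : 0 ≤ a) (ha1 : a ≤ 1) {φ : E → ℝ} (hφ : ContDiff ℝ ∞ φ)
    (hφc : HasCompactSupport φ) (hsupp : tsupport φ ⊆ Metric.ball 0 1) :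
    ∃ L, ∀ v : E, 2 ≤ ‖v‖ →
      weightedLpNorm μ 0 r φ * ‖v‖ ^ γ ≤ L * ‖v‖ ^ (α * a + β * (1 - a)) := by
  obtain ⟨c, hc, h⟩ := h
  set U := 2 ^ |α| * weightedLpNorm μ 0 p (fderiv ℝ φ)
  set V := 2 ^ |β| * weightedLpNorm μ 0 q φ
  have hU : 0 ≤ U := mul_nonneg (by positivity) weightedLpNorm_nonneg
  have hV : 0 ≤ V := mul_nonneg (by positivity) weightedLpNorm_nonneg
  refine ⟨2 ^ |γ| * (c * U ^ a * V ^ (1 - a)), fun v hv ↦ ?_⟩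
  have hv_pos : 0 < ‖v‖ := by linarith
  set f : E → ℝ := fun x ↦ φ (x - v)
  have hgrad : weightedLpNorm μ α p (fderiv ℝ f) ≤ ‖v‖ ^ α * U := by
    rw [show fderiv ℝ f = fun x ↦ fderiv ℝ φ (x - v) from funext fun x ↦ fderiv_comp_sub v]
    exact weightedLpNorm_comp_sub_right_le (hφ.continuous_fderiv (by simp)) (hφc.fderiv ℝ)
      ((tsupport_fderiv_subset ℝ).trans hsupp) hp hv α
  have hlow : weightedLpNorm μ β q f ≤ ‖v‖ ^ β * V :=
    weightedLpNorm_comp_sub_right_le hφ.continuous hφc hsupp hq hv β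
  have hf0 : 0 ∉ tsupport f := zero_notMem_of_subset_norm_preimage
    (tsupport_comp_sub_right_subset_norm_preimage hsupp hv) fun h ↦ (half_pos hv_pos).not_ge h.1
  have : 0 ≤ 1 - a := sub_nonneg.2 ha1
  calc weightedLpNorm μ 0 r φ * ‖v‖ ^ γ ≤ 2 ^ |γ| * weightedLpNorm μ γ r f := by
        rw [mul_comm]
        exact rpow_mul_weightedLpNorm_le_comp_sub_right hφ.continuous hφc hsupp hr hv γ
    _ ≤ 2 ^ |γ| *
          (c * weightedLpNorm μ α p (fderiv ℝ f) ^ a * weightedLpNorm μ β q f ^ (1 - a)) := by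
        gcongr
        exact h f (hφ.comp (contDiff_id.sub contDiff_const))
          (hφc.comp_homeomorph (Homeomorph.subRight v)) hf0
    _ ≤ 2 ^ |γ| * (c * (‖v‖ ^ α * U) ^ a * (‖v‖ ^ β * V) ^ (1 - a)) := by
        have hgrad_nonneg : 0 ≤ weightedLpNorm μ α p (fderiv ℝ f) := weightedLpNorm_nonneg
        have hlow_nonneg : 0 ≤ weightedLpNorm μ β q f := weightedLpNorm_nonneg
        gcongr
    _ = 2 ^ |γ| * (c * U ^ a * V ^ (1 - a)) * ‖v‖ ^ (α * a + β * (1 - a)) := by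
        rw [rpow_mul_rpow_eq hv_pos.le hU, rpow_mul_rpow_eq hv_pos.le hV, Real.rpow_add hv_pos]
        ring

variable [FiniteDimensional ℝ E]

theorem weight_le [Nontrivial E] (h : CKNInequality μ p q r α β γ a) (hp : 0 < p) (hq : 0 < q)
    (hr : 0 < r) (ha0 : 0 ≤ a) (ha1 : a ≤ 1) : γ ≤ α * a + β * (1 - a) := by
  obtain ⟨φ, hφ, hφc, hφ_ne, hsupp⟩ :=
    exists_contDiff_ne_zero_tsupport_subset_norm_preimage (E := E) le_rfl one_pos
  have hφ0 : 0 ∉ tsupport φ := zero_notMem_of_subset_norm_preimage hsupp (by simp)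
  obtain ⟨L, hL⟩ := h.exists_weightedLpNorm_mul_rpow_le hp hq hr ha0 ha1 hφ hφc
    fun x hx ↦ mem_ball_zero_iff.2 (hsupp hx).2
  refine le_of_eventually_mul_natCast_rpow_le (L := L)
    (weightedLpNorm_pos (μ := μ) (s := 0) hφ.continuous hφc hφ0 hφ_ne hr)
    ((eventually_ge_atTop 2).mono fun N hN ↦ ?_)
  obtain ⟨v, hv⟩ := exists_norm_eq E N.cast_nonneg
  rw [← hv]
  exact hL v (by rw [hv]; exact_mod_cast hN)

lemma exists_weightedLpNorm_mul_natCast_rpow_le (h : CKNInequality μ p q r α β γ a)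
    (hp : 0 < p) (hq : 0 < q) (hr : 0 < r)
    (hα : γ + finrank ℝ E / r = α - 1 + finrank ℝ E / p)
    (hβ : a ≠ 1 → γ + finrank ℝ E / r = β + finrank ℝ E / q) {ρ : ℝ} (hρ : 1 < ρ) {ψ : E → ℝ}
    (hψ : ContDiff ℝ ∞ ψ) (hψc : HasCompactSupport ψ) (hsupp : tsupport ψ ⊆ norm ⁻¹' Ico 1 ρ) :
    ∃ L, ∀ N : ℕ, 0 < N →
      weightedLpNorm μ γ r ψ * (N : ℝ) ^ (1 / r) ≤
        L * (N : ℝ) ^ (1 / p * a + 1 / q * (1 - a)) := by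
  obtain ⟨c, -, h⟩ := h
  refine ⟨c * weightedLpNorm μ α p (fderiv ℝ ψ) ^ a * weightedLpNorm μ β q ψ ^ (1 - a),
    fun N hN ↦ ?_⟩
  have hN_pos : (0 : ℝ) < N := Nat.cast_pos.2 hN
  have hρ_pos : 0 < ρ := one_pos.trans hρ
  set A := γ + finrank ℝ E / r with hA
  set f : E → ℝ := lacunarySum ρ A N ψ with hf
  have hgrad : weightedLpNorm μ α p (fderiv ℝ f) =
      (N : ℝ) ^ (1 / p) * weightedLpNorm μ α p (fderiv ℝ ψ) := by
    rw [hf, fderiv_lacunarySum hρ_pos (hψ.differentiable (by simp)),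
      show A + 1 = α + finrank ℝ E / p by linarith]
    exact weightedLpNorm_lacunarySum hρ hp (hψ.continuous_fderiv (by simp))
      (hψc.fderiv ℝ) ((tsupport_fderiv_subset ℝ).trans hsupp)
  have hlow : weightedLpNorm μ β q f ^ (1 - a) =
      ((N : ℝ) ^ (1 / q) * weightedLpNorm μ β q ψ) ^ (1 - a) := by
    by_cases ha : a = 1
    · simp [ha]
    · rw [hf, hβ ha, weightedLpNorm_lacunarySum hρ hq hψ.continuous hψc hsupp]
  calc weightedLpNorm μ γ r ψ * (N : ℝ) ^ (1 / r) = weightedLpNorm μ γ r f := by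
        rw [hf, hA, weightedLpNorm_lacunarySum hρ hr hψ.continuous hψc hsupp, mul_comm]
    _ ≤ c * weightedLpNorm μ α p (fderiv ℝ f) ^ a * weightedLpNorm μ β q f ^ (1 - a) :=
        h f (contDiff_lacunarySum hψ) (hasCompactSupport_lacunarySum hρ_pos.ne' hψc)
          (zero_notMem_tsupport_lacunarySum
            (zero_notMem_of_subset_norm_preimage hsupp (by simp)))
    _ = _ := by
        rw [hgrad, hlow, rpow_mul_rpow_eq hN_pos.le weightedLpNorm_nonneg,
          rpow_mul_rpow_eq hN_pos.le weightedLpNorm_nonneg, Real.rpow_add hN_pos]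
        ring

theorem one_div_le [Nontrivial E] (h : CKNInequality μ p q r α β γ a) (hp : 0 < p)
    (hq : 0 < q) (hr : 0 < r) (hα : γ + finrank ℝ E / r = α - 1 + finrank ℝ E / p)
    (hβ : a ≠ 1 → γ + finrank ℝ E / r = β + finrank ℝ E / q) :
    1 / r ≤ 1 / p * a + 1 / q * (1 - a) := by
  obtain ⟨ψ, hψ, hψc, hψ_ne, hsupp⟩ :=
    exists_contDiff_ne_zero_tsupport_subset_norm_preimage (E := E) zero_le_one one_lt_two
  have hψ0 : 0 ∉ tsupport ψ := zero_notMem_of_subset_norm_preimage hsupp (by simp)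
  obtain ⟨L, hL⟩ := h.exists_weightedLpNorm_mul_natCast_rpow_le hp hq hr hα hβ one_lt_two hψ hψc
    (hsupp.trans (preimage_mono Ioo_subset_Ico_self))
  exact le_of_eventually_mul_natCast_rpow_le
    (weightedLpNorm_pos (μ := μ) (s := γ) hψ.continuous hψc hψ0 hψ_ne hr)
    ((eventually_gt_atTop 0).mono hL)

end CKNInequality

theorem stmt_5_general {E : Type*} [NormedAddCommGroup E] [NormedSpace ℝ E]
    [FiniteDimensional ℝ E] [Nontrivial E] [MeasurableSpace E] [BorelSpace E] {μ : Measure E}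
    [μ.IsAddHaarMeasure] {p q r α β γ a : ℝ} (hp : 0 < p) (hq : 0 < q) (hr : 0 < r)
    (ha0 : 0 ≤ a) (ha1 : a ≤ 1)
    (hbal : γ + finrank ℝ E / r =
      a * (α - 1 + finrank ℝ E / p) + (1 - a) * (β + finrank ℝ E / q))
    (h : CKNInequality μ p q r α β γ a) :
    0 ≤ -γ + a * α + (1 - a) * β ∧
      (1 / r + γ / finrank ℝ E = 1 / p + (α - 1) / finrank ℝ E →
        -γ + a * α + (1 - a) * β ≤ a) := by
  refine ⟨by linarith [h.weight_le hp hq hr ha0 ha1], fun hcrit ↦ ?_⟩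
  have hn : (0 : ℝ) < finrank ℝ E := Nat.cast_pos.2 finrank_pos
  have hα : γ + finrank ℝ E / r = α - 1 + finrank ℝ E / p := by
    field_simp at hcrit ⊢
    linarith
  have hβ : a ≠ 1 → γ + finrank ℝ E / r = β + finrank ℝ E / q := fun ha ↦
    mul_left_cancel₀ (sub_ne_zero.2 ha.symm) (by rw [← hα] at hbal; linarith)
  have hexp := mul_le_mul_of_nonneg_left (h.one_div_le hp hq hr hα hβ) hn.le
  have hexpand : (finrank ℝ E : ℝ) * (1 / p * a + 1 / q * (1 - a)) =
      a * (finrank ℝ E / p) + (1 - a) * (finrank ℝ E / q) := by ring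
  rw [hexpand, mul_one_div] at hexp
  linarith

/-- Caffarelli–Kohn–Nirenberg inequalities on ℝⁿ (necessity direction, in the
formulation of D'Ancona–Luca'). -/
theorem stmt_5 (n : ℕ) (hn : 1 ≤ n) (p q r α β γ a : ℝ)
    (hp : 1 ≤ p) (hq : 1 ≤ q) (hr : 0 < r) (ha0 : 0 < a) (ha1 : a ≤ 1)
    (hγ : -γ < (n : ℝ) / r) (hα : -α < (n : ℝ) / p) (hβ : -β < (n : ℝ) / q)
    (hbal : γ + (n : ℝ) / r =
      a * (α - 1 + (n : ℝ) / p) + (1 - a) * (β + (n : ℝ) / q))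
    (hineq : ∃ c : ℝ, 0 < c ∧ ∀ f : EuclideanSpace ℝ (Fin n) → ℝ,
      ContDiff ℝ (⊤ : ℕ∞) f → HasCompactSupport f →
      (∫ x, ‖x‖ ^ (γ * r) * |f x| ^ r) ^ (1 / r) ≤
        c * (∫ x, ‖x‖ ^ (α * p) * ‖gradient f x‖ ^ p) ^ (a / p) *
          (∫ x, ‖x‖ ^ (β * q) * |f x| ^ q) ^ ((1 - a) / q)) :
    0 ≤ -γ + a * α + (1 - a) * β ∧
      (1 / r + γ / (n : ℝ) = 1 / p + (α - 1) / (n : ℝ) →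
        -γ + a * α + (1 - a) * β ≤ a) := by
  have : Nontrivial (EuclideanSpace ℝ (Fin n)) :=
    nontrivial_of_finrank_pos (R := ℝ) (by rw [finrank_euclideanSpace_fin]; exact hn)
  simpa only [finrank_euclideanSpace_fin] using stmt_5_general (by linarith) (by linarith) hr
    ha0.le ha1 (by simpa only [finrank_euclideanSpace_fin] using hbal)
    (CKNInequality.of_integral_gradient hineq)
end
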